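/- As n → ∞, var(vol(T_n)) = (7·log n)/(27n²) + O(n^{−2}); that is, there exist a constant C > 0 and n₀ such that |var(vol(T_n)) − 7·log n/(27n²)| ≤ C/n² for all n ≥ n₀. -/

import Mathlib

open MeasureTheory

noncomputable section

/-- The triangle with vertices (0,0), (1,0), (0,1). -/
def T : Set (ℝ × ℝ) := convexHull ℝ {(0, 0), (1, 0), (0, 1)}

/-- The uniform distribution on `T`: twice Lebesgue measure restricted to `T`. -/
def μT : Measure (ℝ × ℝ) := (2 : ENNReal) • (volume.restrict T)

/-- Joint law of `n` independent uniform points in `T`. -/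
def P (n : ℕ) : Measure (Fin n → ℝ × ℝ) := Measure.pi fun _ => μT

/-- The random convex chain: convex hull of the points together with `(1,0)` and `(0,1)`. -/
def Tchain (n : ℕ) (ω : Fin n → ℝ × ℝ) : Set (ℝ × ℝ) :=
  convexHull ℝ (Set.range ω ∪ {(1, 0), (0, 1)})

/-- Normalized area `V_n = 2 vol(T_n)`. -/
def V (n : ℕ) (ω : Fin n → ℝ × ℝ) : ℝ := 2 * (volume (Tchain n ω)).toReal

/-- Number of vertices of `T_n` other than the two corners. -/
def N (n : ℕ) (ω : Fin n → ℝ × ℝ) : ℕ :=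
  (Set.extremePoints ℝ (Tchain n ω)).ncard - 2

/-- Normalized moments `q_{n,k} = C(n+k,k) E[V_n^k]`. -/
def q (n k : ℕ) : ℝ := ((n + k).choose k : ℝ) * ∫ ω, (V n ω) ^ k ∂ P n

/-- Probability generating function of `N_n`. -/
def G (n : ℕ) (t : ℝ) : ℝ := ∫ ω, t ^ (N n ω) ∂ P n

/-- Harmonic number. -/
def H (j : ℕ) : ℝ := ∑ i ∈ Finset.range j, 1 / ((i : ℝ) + 1)

/-- Generalized harmonic number of order 2. -/
def H2 (j : ℕ) : ℝ := ∑ i ∈ Finset.range j, 1 / ((i : ℝ) + 1) ^ 2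

/-- `c(k,ℓ)`: elementary symmetric polynomial `e_k` of `2/(j(j+1))`, `j = 1,…,ℓ`. -/
def c (k l : ℕ) : ℝ :=
  ∑ S ∈ (Finset.Icc 1 l).powersetCard k, ∏ j ∈ S, 2 / ((j : ℝ) * ((j : ℝ) + 1))

/-! ### Geometry -/

lemma T_eq : T = {p : ℝ × ℝ | 0 ≤ p.1 ∧ 0 ≤ p.2 ∧ p.1 + p.2 ≤ 1} := by
  apply Set.Subset.antisymm
  · apply convexHull_min
    · rintro p (rfl | rfl | rfl) <;> norm_num
    · rintro ⟨x, y⟩ ⟨h1, h2, h3⟩ ⟨x', y'⟩ ⟨h1', h2', h3'⟩ s t hs ht hst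
      simp only [Prod.smul_mk, smul_eq_mul, Prod.mk_add_mk, Set.mem_ofPred_eq] at *
      refine ⟨by positivity, by positivity, ?_⟩
      nlinarith
  · rintro ⟨x, y⟩ ⟨h1, h2, h3⟩
    simp only at h1 h2 h3
    have hc : Convex ℝ T := convex_convexHull ℝ _
    have hO : ((0:ℝ),(0:ℝ)) ∈ T := subset_convexHull ℝ _ (by simp)
    have hA : ((1:ℝ),(0:ℝ)) ∈ T := subset_convexHull ℝ _ (by simp)
    have hB : ((0:ℝ),(1:ℝ)) ∈ T := subset_convexHull ℝ _ (by simp)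
    have := hc.sum_mem (t := (Finset.univ : Finset (Fin 3))) (w := ![1-x-y, x, y])
      (z := ![((0:ℝ),(0:ℝ)), (1,0), (0,1)])
      (by intro i _; fin_cases i <;> simp <;> linarith) (by simp [Fin.sum_univ_three]; ring)
      (by intro i _; fin_cases i <;> simp [hO, hA, hB])
    simpa [Fin.sum_univ_three] using this

lemma mem_T (p : ℝ × ℝ) : p ∈ T ↔ 0 ≤ p.1 ∧ 0 ≤ p.2 ∧ p.1 + p.2 ≤ 1 := by
  rw [T_eq]; rfl

lemma convex_T : Convex ℝ T := convex_convexHull ℝ _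

lemma measurableSet_T : MeasurableSet T := by
  rw [T_eq]
  measurability

/-- The affine maps used: `(x,y) ↦ (αx, βx + γy + δ)`. -/
def Af (α β γ δ : ℝ) (p : ℝ × ℝ) : ℝ × ℝ := (α * p.1, β * p.1 + γ * p.2 + δ)

/-- linear part -/
def AfL (α β γ : ℝ) : ℝ × ℝ →ₗ[ℝ] ℝ × ℝ :=
  Matrix.toLin (Module.Basis.finTwoProd ℝ) (Module.Basis.finTwoProd ℝ) !![α, 0; β, γ]

lemma AfL_apply (α β γ : ℝ) (p : ℝ × ℝ) : AfL α β γ p = (α * p.1, β * p.1 + γ * p.2) := by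
  rw [AfL, Matrix.toLin_finTwoProd_apply]; simp

lemma Af_eq (α β γ δ : ℝ) :
    Af α β γ δ = ⇑((AfL α β γ).toAffineMap + AffineMap.const ℝ (ℝ × ℝ) ((0:ℝ), δ)) := by
  ext p <;> simp [Af, AfL_apply]

lemma Af_image_convexHull (α β γ δ : ℝ) (s : Set (ℝ × ℝ)) :
    Af α β γ δ '' convexHull ℝ s = convexHull ℝ (Af α β γ δ '' s) := by
  rw [Af_eq, AffineMap.image_convexHull]

lemma volume_Af_image (α β γ δ : ℝ) (s : Set (ℝ × ℝ)) :
    volume (Af α β γ δ '' s) = ENNReal.ofReal |α * γ| * volume s := by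
  have h : Af α β γ δ '' s = (fun p => p + ((0:ℝ), δ)) '' (AfL α β γ '' s) := by
    rw [← Set.image_comp]
    congr 1
    ext p <;> simp [Af, AfL_apply]
  rw [h, Set.image_add_right, measure_preimage_add_right, Measure.addHaar_image_linearMap]
  congr 3
  rw [AfL, LinearMap.det_toLin, Matrix.det_fin_two]
  simp

lemma Af_injective (α β γ δ : ℝ) (hα : α ≠ 0) (hγ : γ ≠ 0) : Function.Injective (Af α β γ δ) := by
  rintro ⟨x, y⟩ ⟨x', y'⟩ h
  simp only [Af, Prod.mk.injEq] at h
  obtain ⟨h1, h2⟩ := h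
  have hx := mul_left_cancel₀ hα h1
  subst hx
  have hy : γ * y = γ * y' := by linarith
  rw [mul_left_cancel₀ hγ hy]

lemma measurable_Af (α β γ δ : ℝ) : Measurable (Af α β γ δ) := by
  unfold Af; fun_prop

lemma μT_restrict_Af (α β γ δ : ℝ) (h : 0 < α * γ) (hT : Af α β γ δ '' T ⊆ T) :
    μT.restrict (Af α β γ δ '' T) = ENNReal.ofReal (α * γ) • μT.map (Af α β γ δ) := by
  ext B hB
  rw [Measure.restrict_apply hB, Measure.smul_apply, Measure.map_apply (measurable_Af _ _ _ _) hB]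
  simp only [μT, Measure.smul_apply, smul_eq_mul]
  rw [Measure.restrict_apply' measurableSet_T, Measure.restrict_apply' measurableSet_T]
  have : B ∩ Af α β γ δ '' T ∩ T = Af α β γ δ '' (Af α β γ δ ⁻¹' B ∩ T) := by
    rw [Set.image_preimage_inter, Set.inter_assoc, Set.inter_eq_left.mpr hT]
  rw [this, volume_Af_image, abs_of_pos h]
  ring

lemma lintegral_scale (r : ℝ) (hr : 0 < r) (f : ℝ → ENNReal) (hf : Measurable f) :
    ∫⁻ y, f y = ENNReal.ofReal r * ∫⁻ q, f (r * q) := by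
  have h := Real.smul_map_volume_mul_left (a := r) hr.ne'
  conv_lhs => rw [← h]
  rw [lintegral_smul_measure, lintegral_map hf (by fun_prop), abs_of_pos hr, smul_eq_mul]

lemma lintegral_μT (g : ℝ × ℝ → ENNReal) (hg : Measurable g) :
    ∫⁻ p, g p ∂μT = ∫⁻ r in Set.Ioo (0:ℝ) 1,
      ENNReal.ofReal (2*r) * ∫⁻ q in Set.Ioo (0:ℝ) 1, g (1 - r, r * q) := by
  have hm : Measurable (T.indicator g) := hg.indicator measurableSet_T
  rw [μT, lintegral_smul_measure, ← lintegral_indicator measurableSet_T, Measure.volume_eq_prod,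
    lintegral_prod _ hm.aemeasurable, ← lintegral_sub_left_eq_self _ (1:ℝ),
    ← lintegral_indicator measurableSet_Ioo, smul_eq_mul, ← lintegral_const_mul']
  swap
  · norm_num
  apply lintegral_congr_ae
  have h0 : ∀ᵐ r : ℝ, r ≠ 0 := by simp [ae_iff]
  have h1 : ∀ᵐ r : ℝ, r ≠ 1 := by simp [ae_iff]
  filter_upwards [h0, h1] with r hr0 hr1
  by_cases hr : r ∈ Set.Ioo (0:ℝ) 1
  · rw [Set.indicator_of_mem hr, ENNReal.ofReal_mul (by norm_num), ENNReal.ofReal_ofNat,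
      lintegral_scale r hr.1 (fun y => T.indicator g (1 - r, y)) (hm.comp measurable_prodMk_left), ← mul_assoc,
      setLIntegral_congr (Ioo_ae_eq_Icc (a := (0:ℝ)) (b := 1)),
      ← lintegral_indicator measurableSet_Icc]
    congr 1
    apply lintegral_congr
    intro q
    have : (1 - r, r*q) ∈ T ↔ q ∈ Set.Icc (0:ℝ) 1 := by
      rw [mem_T]
      obtain ⟨hr2, hr3⟩ := hr
      constructor
      · rintro ⟨-, h2, h3⟩
        simp only at h2 h3
        exact ⟨by by_contra hc; push Not at hc; nlinarith, by nlinarith⟩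
      · rintro ⟨h2, h3⟩
        exact ⟨by simp; linarith, by simp; positivity, by simp; nlinarith⟩
    by_cases hq : q ∈ Set.Icc (0:ℝ) 1
    · rw [Set.indicator_of_mem hq, Set.indicator_of_mem (this.mpr hq)]
    · rw [Set.indicator_of_notMem hq, Set.indicator_of_notMem (fun h => hq (this.mp h))]
  · rw [Set.indicator_of_notMem hr]
    have : ∀ y, T.indicator g (1 - r, y) = 0 := by
      intro y
      apply Set.indicator_of_notMem
      rw [mem_T]
      rintro ⟨h2, h3, h4⟩
      simp only at h2 h3 h4
      exact hr ⟨lt_of_le_of_ne (by linarith) (Ne.symm hr0), lt_of_le_of_ne (by linarith) hr1⟩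
    simp [this]

lemma lintegral_one_sub_pow (k : ℕ) :
    ∫⁻ q in Set.Ioo (0:ℝ) 1, ENNReal.ofReal (1 - q) ^ k = ENNReal.ofReal (1/((k:ℝ)+1)) := by
  have : ∫⁻ q in Set.Ioo (0:ℝ) 1, ENNReal.ofReal (1 - q) ^ k
      = ∫⁻ q in Set.Ioo (0:ℝ) 1, ENNReal.ofReal ((1 - q) ^ k) := by
    apply setLIntegral_congr_fun measurableSet_Ioo
    intro q hq
    simp only [ENNReal.ofReal_pow (show 0 ≤ 1 - q by linarith [hq.2])]
  rw [this, ← ofReal_integral_eq_lintegral_ofReal]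
  · congr 1
    rw [← integral_Ioc_eq_integral_Ioo, ← intervalIntegral.integral_of_le (by norm_num),
      intervalIntegral.integral_comp_sub_left (fun x => x^k)]
    simp
  · exact (Continuous.integrableOn_Icc (by fun_prop)).mono_set Set.Ioo_subset_Icc_self
  · refine (ae_restrict_iff' measurableSet_Ioo).mpr (Filter.Eventually.of_forall fun q hq => ?_)
    exact pow_nonneg (by linarith [hq.2]) _

lemma μT_univ : μT Set.univ = 1 := by
  have h := lintegral_μT (fun _ => 1) measurable_const
  simp only [lintegral_const, one_mul, Measure.restrict_apply_univ, Real.volume_Ioo, sub_zero,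
    ENNReal.ofReal_one, mul_one] at h
  rw [h, ← ofReal_integral_eq_lintegral_ofReal]
  · rw [← integral_Ioc_eq_integral_Ioo, ← intervalIntegral.integral_of_le (by norm_num),
      intervalIntegral.integral_const_mul, integral_id]
    norm_num
  · exact (Continuous.integrableOn_Icc (by fun_prop)).mono_set Set.Ioo_subset_Icc_self
  · refine (ae_restrict_iff' measurableSet_Ioo).mpr (Filter.Eventually.of_forall fun q hq => ?_)
    simp; exact hq.1.le

instance : IsProbabilityMeasure μT := ⟨μT_univ⟩

lemma two_volume_T : 2 * volume T = 1 := by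
  have := μT_univ
  rwa [μT, Measure.smul_apply, Measure.restrict_apply_univ, smul_eq_mul] at this

instance (n : ℕ) : IsProbabilityMeasure (P n) := by
  unfold P; infer_instance

/-- the doubled area of the hull, as a set function -/
def hullW (R : Set (ℝ × ℝ)) : ENNReal := 2 * volume (convexHull ℝ (R ∪ {(1, 0), (0, 1)}))

/-- the doubled area of the hull with corners `(z,0)`, `(0,1)`. -/
def hullZ (z : ℝ) (R : Set (ℝ × ℝ)) : ENNReal := 2 * volume (convexHull ℝ (R ∪ {(z, 0), (0, 1)}))

lemma hullW_shear (q : ℝ) (hq : q ≤ 1) (R : Set (ℝ × ℝ)) :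
    hullW (Af 1 (-q) (1-q) q '' R) = ENNReal.ofReal (1-q) * hullW R := by
  unfold hullW
  have : Af 1 (-q) (1-q) q '' R ∪ {(1, 0), (0, 1)}
      = Af 1 (-q) (1-q) q '' (R ∪ {(1, 0), (0, 1)}) := by
    rw [Set.image_union, Set.image_pair]
    simp [Af]
  rw [this, ← Af_image_convexHull, volume_Af_image, one_mul, abs_of_nonneg (by linarith)]
  ring

lemma hullZ_scale (z : ℝ) (hz : 0 ≤ z) (R : Set (ℝ × ℝ)) :
    hullZ z (Af z 0 1 0 '' R) = ENNReal.ofReal z * hullW R := by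
  unfold hullW hullZ
  have : Af z 0 1 0 '' R ∪ {(z, 0), (0, 1)}
      = Af z 0 1 0 '' (R ∪ {(1, 0), (0, 1)}) := by
    rw [Set.image_union, Set.image_pair]
    simp [Af]
  rw [this, ← Af_image_convexHull, volume_Af_image, mul_one, abs_of_nonneg hz]
  ring

lemma image_shear_T (q : ℝ) (hq0 : 0 ≤ q) (hq : q < 1) :
    Af 1 (-q) (1-q) q '' T = {p | p ∈ T ∧ q * (1 - p.1) ≤ p.2} := by
  ext ⟨x, y⟩
  simp only [Set.mem_image, mem_T, Set.mem_ofPred_eq, Af, Prod.exists, Prod.mk.injEq]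
  constructor
  · rintro ⟨a, b, ⟨h1, h2, h3⟩, rfl, rfl⟩
    refine ⟨⟨by linarith, by nlinarith, by nlinarith⟩, by nlinarith⟩
  · rintro ⟨⟨h1, h2, h3⟩, h4⟩
    have hp : 0 < 1 - q := by linarith
    refine ⟨x, (y - q * (1-x))/(1-q), ⟨h1, div_nonneg (by linarith) hp.le, ?_⟩, by ring, ?_⟩
    · rw [← le_sub_iff_add_le', div_le_iff₀ hp]; nlinarith
    · field_simp; ring

lemma image_scale_T (z : ℝ) (hz0 : 0 < z) (hz : z ≤ 1) :
    Af z 0 1 0 '' T = {p | p ∈ T ∧ p.1 + z * p.2 ≤ z} := by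
  ext ⟨x, y⟩
  simp only [Set.mem_image, mem_T, Set.mem_ofPred_eq, Af, Prod.exists, Prod.mk.injEq]
  constructor
  · rintro ⟨a, b, ⟨h1, h2, h3⟩, rfl, rfl⟩
    refine ⟨⟨by positivity, by linarith, by nlinarith⟩, by nlinarith⟩
  · rintro ⟨⟨h1, h2, h3⟩, h4⟩
    refine ⟨x/z, y, ⟨by positivity, h2, ?_⟩, by field_simp, by ring⟩
    rw [← le_sub_iff_add_le, div_le_iff₀ hz0]; nlinarith

lemma scale_T_subset (z : ℝ) (hz0 : 0 < z) (hz : z ≤ 1) : Af z 0 1 0 '' T ⊆ T := by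
  rw [image_scale_T z hz0 hz]; exact fun p hp => hp.1

lemma shear_T_subset (q : ℝ) (hq0 : 0 ≤ q) (hq : q < 1) : Af 1 (-q) (1-q) q '' T ⊆ T := by
  rw [image_shear_T q hq0 hq]; exact fun p hp => hp.1

lemma measurableSet_Af_T (α β γ δ : ℝ) (hα : α ≠ 0) (hγ : γ ≠ 0) :
    MeasurableSet (Af α β γ δ '' T) :=
  measurableSet_T.image_of_measurable_injOn (measurable_Af _ _ _ _)
    (Af_injective _ _ _ _ hα hγ).injOn

/-- Geometric decomposition along the line through `(z,0)` and `(0,1)`. -/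
lemma hull_lower (z : ℝ) (hz0 : 0 < z) (hz : z < 1) (R : Set (ℝ × ℝ)) (hR : R ⊆ T) :
    convexHull ℝ (insert (z, 0) R ∪ {(1, 0), (0, 1)}) ∩ {p | p.1 + z * p.2 ≤ z}
      = convexHull ℝ ((R ∩ Af z 0 1 0 '' T) ∪ {(z, 0), (0, 1)}) := by
  rw [image_scale_T z hz0 hz.le]
  set X2 := convexHull ℝ ((R ∩ {p | p ∈ T ∧ p.1 + z * p.2 ≤ z}) ∪ {(z, 0), (0, 1)}) with hX2
  have hX2c : Convex ℝ X2 := convex_convexHull ℝ _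
  have hZ2 : ((z:ℝ), (0:ℝ)) ∈ X2 := subset_convexHull ℝ _ (by simp)
  have hB2 : ((0:ℝ), (1:ℝ)) ∈ X2 := subset_convexHull ℝ _ (by simp)
  have hlc : Convex ℝ {p : ℝ × ℝ | p.1 + z * p.2 ≤ z} := by
    rintro ⟨x, y⟩ h ⟨x', y'⟩ h' s t hs ht hst
    simp only [Prod.smul_mk, smul_eq_mul, Prod.mk_add_mk, Set.mem_ofPred_eq] at *
    nlinarith
  have huc : Convex ℝ {p : ℝ × ℝ | p ∈ T ∧ z ≤ p.1 + z * p.2} := by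
    rintro ⟨x, y⟩ ⟨hT, h⟩ ⟨x', y'⟩ ⟨hT', h'⟩ s t hs ht hst
    refine ⟨convex_T hT hT' hs ht hst, ?_⟩
    simp only [Prod.smul_mk, smul_eq_mul, Prod.mk_add_mk] at *
    nlinarith
  have hX2T : X2 ⊆ T := by
    apply convexHull_min _ convex_T
    rintro p (⟨h, -⟩ | rfl | rfl)
    · exact hR h
    · rw [mem_T]; exact ⟨hz0.le, le_rfl, by simp; linarith⟩
    · rw [mem_T]; norm_num
  have hX2l : X2 ⊆ {p : ℝ × ℝ | p.1 + z * p.2 ≤ z} := by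
    apply convexHull_min _ hlc
    rintro p (⟨-, h⟩ | rfl | rfl)
    · exact h.2
    · simp
    · simp
  have hline : ∀ p ∈ T, p.1 + z * p.2 = z → p ∈ X2 := by
    rintro ⟨x, y⟩ hp h
    rw [mem_T] at hp
    simp only at hp h
    have := hX2c hZ2 hB2 (show 0 ≤ 1 - y by linarith) hp.2.1 (by ring)
    convert this using 1
    ext <;> simp
    linarith
  apply Set.Subset.antisymm
  · rintro p ⟨hp, hpl⟩
    have hsub : (insert (z, 0) R ∪ {(1, 0), (0, 1)} : Set (ℝ × ℝ))
        ⊆ {p : ℝ × ℝ | p ∈ T ∧ z ≤ p.1 + z * p.2} ∪ X2 := by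
      rintro v ((rfl | hv) | rfl | rfl)
      · exact Or.inr hZ2
      · by_cases h : v.1 + z * v.2 ≤ z
        · exact Or.inr (subset_convexHull ℝ _ (Or.inl ⟨hv, hR hv, h⟩))
        · exact Or.inl ⟨hR hv, (not_le.mp h).le⟩
      · left; refine ⟨?_, by simp; linarith⟩
        rw [mem_T]; norm_num
      · exact Or.inr hB2
    have hp2 := convexHull_mono hsub hp
    rw [huc.convexHull_union hX2c ⟨(1,0), by rw [mem_T]; norm_num, by simp; linarith⟩ ⟨_, hZ2⟩,
      mem_convexJoin] at hp2
    obtain ⟨u, ⟨huT, hu⟩, v, hv, s, t, hs, ht, hst, rfl⟩ := hp2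
    have hvl := hX2l hv
    have hvT := hX2T hv
    set lu := u.1 + z * u.2 - z with hlu
    set lv := z - (v.1 + z * v.2) with hlv
    have hlu0 : 0 ≤ lu := by linarith
    have hlv0 : 0 ≤ lv := by simp only [Set.mem_ofPred_eq] at hvl; linarith
    have hp' : s * lu ≤ t * lv := by
      simp only [Set.mem_ofPred_eq, Prod.fst_add, Prod.smul_fst, Prod.snd_add, Prod.smul_snd,
        smul_eq_mul] at hpl
      have : s * z + t * z = z := by rw [← add_mul, hst, one_mul]
      rw [hlu, hlv]; linarith
    rcases hlu0.eq_or_lt with h0 | hpos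
    · exact hX2c (hline u huT (by linarith)) hv hs ht hst
    rcases hlv0.eq_or_lt with h0 | hposv
    · rw [← h0, mul_zero] at hp'
      have : s = 0 := by
        by_contra hne
        have : 0 < s := lt_of_le_of_ne hs (Ne.symm hne)
        nlinarith
      subst this
      have : t = 1 := by linarith
      subst this
      simpa using hv
    · have hsum : 0 < lu + lv := by linarith
      have hc : (lv/(lu+lv)) • u + (lu/(lu+lv)) • v ∈ X2 := by
        apply hline
        · exact convex_T huT hvT (by positivity) (by positivity) (by field_simp; ring)
        · simp only [Prod.fst_add, Prod.smul_fst, Prod.snd_add, Prod.smul_snd, smul_eq_mul]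
          field_simp
          rw [hlu, hlv]; ring
      have hw : 0 ≤ 1 - s * (lu+lv)/lv := by
        rw [sub_nonneg, div_le_one hposv]
        have : t = 1 - s := by linarith
        rw [this] at hp'; linarith
      have := hX2c hc hv (show 0 ≤ s * (lu+lv)/lv by positivity) hw (by ring)
      convert this using 1
      rw [smul_add, smul_smul, smul_smul, add_assoc, ← add_smul]
      have e1 : s * (lu+lv)/lv * (lv/(lu+lv)) = s := by field_simp
      have e2 : s * (lu+lv)/lv * (lu/(lu+lv)) + (1 - s * (lu+lv)/lv) = t := by
        have : t = 1 - s := by linarith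
        rw [this]; field_simp; ring
      rw [e1, e2]
  · apply Set.subset_inter _ hX2l
    apply convexHull_min _ (convex_convexHull ℝ _)
    rintro p (⟨h, -⟩ | rfl | rfl)
    · exact subset_convexHull ℝ _ (by simp [h])
    · exact subset_convexHull ℝ _ (by simp)
    · exact subset_convexHull ℝ _ (by simp)

lemma hull_upper (z : ℝ) (hz0 : 0 < z) (hz : z < 1) (R : Set (ℝ × ℝ)) (hR : R ⊆ T) :
    convexHull ℝ (insert (z, 0) R ∪ {(1, 0), (0, 1)}) \ {p | p.1 + z * p.2 ≤ z}
      = T \ (Af z 0 1 0 '' T) := by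
  rw [image_scale_T z hz0 hz.le]
  apply Set.Subset.antisymm
  · rintro p ⟨hp, hpl⟩
    refine ⟨?_, fun h => hpl h.2⟩
    revert hp p
    intro p hp hpl
    refine convexHull_min ?_ convex_T hp
    rintro p ((rfl | hv) | rfl | rfl)
    · rw [mem_T]; exact ⟨hz0.le, le_rfl, by simp; linarith⟩
    · exact hR hv
    · rw [mem_T]; norm_num
    · rw [mem_T]; norm_num
  · rintro ⟨x, y⟩ ⟨hp, hpl⟩
    have hl : z < x + z * y := by
      by_contra hc
      exact hpl ⟨hp, not_lt.mp hc⟩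
    refine ⟨?_, fun h => hpl ⟨hp, h⟩⟩
    rw [mem_T] at hp
    simp only at hp
    set K := convexHull ℝ (insert (z, 0) R ∪ {(1, 0), (0, 1)}) with hK
    have hc : Convex ℝ K := convex_convexHull ℝ _
    have hO : ((z:ℝ),(0:ℝ)) ∈ K := subset_convexHull ℝ _ (by simp)
    have hA : ((1:ℝ),(0:ℝ)) ∈ K := subset_convexHull ℝ _ (by simp)
    have hB : ((0:ℝ),(1:ℝ)) ∈ K := subset_convexHull ℝ _ (by simp)
    have h1z : 0 < 1 - z := by linarith
    have := hc.sum_mem (t := (Finset.univ : Finset (Fin 3)))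
      (w := ![(1-x-y)/(1-z), (x+z*y-z)/(1-z), y])
      (z := ![((z:ℝ),(0:ℝ)), (1,0), (0,1)])
      (by
        intro i _
        fin_cases i
        · exact div_nonneg (by linarith) h1z.le
        · exact div_nonneg (by linarith) h1z.le
        · exact hp.2.1)
      (by simp [Fin.sum_univ_three]; field_simp; ring)
      (by intro i _; fin_cases i <;> simp [hO, hA, hB])
    convert this using 1
    ext
    · simp [Fin.sum_univ_three]; field_simp; ring
    · simp [Fin.sum_univ_three]

lemma hullW_decomp (r : ℝ) (hr0 : 0 < r) (hr : r < 1) (R : Set (ℝ × ℝ)) (hR : R ⊆ T) :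
    hullW (insert (1-r, 0) R) = ENNReal.ofReal r + hullZ (1-r) (R ∩ Af (1-r) 0 1 0 '' T) := by
  have hz0 : 0 < 1 - r := by linarith
  have hz : 1 - r < 1 := by linarith
  have hm : MeasurableSet {p : ℝ × ℝ | p.1 + (1-r) * p.2 ≤ 1-r} := by measurability
  have hmD := measurableSet_Af_T (1-r) 0 1 0 hz0.ne' one_ne_zero
  have hvD : 2 * volume (Af (1-r) 0 1 0 '' T) = ENNReal.ofReal (1-r) := by
    rw [volume_Af_image, mul_one, abs_of_pos hz0, mul_left_comm, two_volume_T, mul_one]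
  rw [hullW, hullZ, ← measure_inter_add_sdiff _ hm, hull_lower _ hz0 hz R hR,
    hull_upper _ hz0 hz R hR, mul_add, add_comm]
  congr 1
  rw [measure_sdiff (scale_T_subset _ hz0 hz.le) hmD.nullMeasurableSet, ENNReal.mul_sub,
    two_volume_T, hvD, ← ENNReal.ofReal_one, ← ENNReal.ofReal_sub _ hz0.le]
  · congr 1; ring
  · intros; norm_num
  · intro h
    rw [h] at hvD
    simp at hvD

/-! ### Measurability and product measures -/

lemma convexHull_range_image {ι : Type*} [Fintype ι] (v : ι → ℝ × ℝ) :
    convexHull ℝ (Set.range v) = (fun w : ι → ℝ => ∑ i, w i • v i) '' stdSimplex ℝ ι := by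
  classical
  have h := convexHull_rangle_single_eq_stdSimplex (R := ℝ) ι
  have h2 : (fun w : ι → ℝ => ∑ i, w i • v i) = ⇑(Fintype.linearCombination ℝ v) := by
    ext w <;> simp [Fintype.linearCombination_apply]
  rw [h2, ← h, LinearMap.image_convexHull, ← Set.range_comp]
  congr 2
  ext i <;> simp

lemma isClosed_hull {ι : Type*} [Fintype ι] :
    IsClosed {p : (ι → ℝ × ℝ) × (ℝ × ℝ) | p.2 ∈ convexHull ℝ (Set.range p.1)} := by
  have hc : IsClosed {p : stdSimplex ℝ ι × ((ι → ℝ × ℝ) × (ℝ × ℝ)) |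
      ∑ i, (p.1).1 i • p.2.1 i = p.2.2} := by
    apply isClosed_eq
    · apply continuous_finsetSum
      intro i _
      exact ((continuous_apply i).comp (continuous_subtype_val.comp continuous_fst)).smul
        ((continuous_apply i).comp (continuous_fst.comp continuous_snd))
    · fun_prop
  have := isClosedMap_snd_of_compactSpace _ hc
  convert this using 1
  ext ⟨v, x⟩
  simp only [convexHull_range_image, Set.mem_image, Set.mem_ofPred_eq]
  constructor
  · rintro ⟨w, hw, h⟩
    exact ⟨(⟨w, hw⟩, (v, x)), h, rfl⟩
  · rintro ⟨⟨⟨w, hw⟩, ⟨v', x'⟩⟩, h, h'⟩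
    simp only [Prod.mk.injEq] at h'
    obtain ⟨rfl, rfl⟩ := h'
    exact ⟨w, hw, h⟩

lemma measurable_hull (n : ℕ) (b c : ℝ × ℝ) : Measurable fun ω : Fin n → ℝ × ℝ =>
    volume (convexHull ℝ (Set.range ω ∪ {b, c})) := by
  have h1 : Measurable fun v : Fin n ⊕ Fin 2 → ℝ × ℝ => volume (convexHull ℝ (Set.range v)) :=
    measurable_measure_prodMk_left (isClosed_hull (ι := Fin n ⊕ Fin 2)).measurableSet
  have h2 : Measurable fun ω : Fin n → ℝ × ℝ =>
      (Sum.elim ω ![b, c] : Fin n ⊕ Fin 2 → ℝ × ℝ) := by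
    rw [measurable_pi_iff]
    rintro (i | i)
    · exact measurable_pi_apply i
    · exact measurable_const
  convert h1.comp h2 using 2
  simp only [Function.comp, Set.Sum.elim_range]
  congr 3
  simp [Matrix.range_cons, Matrix.range_empty, Set.pair_comm]

lemma measurable_hullW (n : ℕ) : Measurable fun ω : Fin n → ℝ × ℝ => hullW (Set.range ω) :=
  (measurable_hull n _ _).const_mul _

lemma measurable_hullZ (z : ℝ) (n : ℕ) :
    Measurable fun ω : Fin n → ℝ × ℝ => hullZ z (Set.range ω) :=
  (measurable_hull n _ _).const_mul _

section general
variable {E : Type*} [MeasurableSpace E]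

lemma pi_smul_map (n : ℕ) (μ ν : Measure E) [IsFiniteMeasure μ] [IsFiniteMeasure ν] (f : E → E)
    (hf : Measurable f) (k : ENNReal) (h : ν = k • μ.map f) :
    Measure.pi (fun _ : Fin n => ν) = k ^ n • (Measure.pi (fun _ : Fin n => μ)).map (fun ω i => f (ω i)) := by
  apply Measure.pi_eq
  intro s hs
  have hm : Measurable (fun (ω : Fin n → E) i => f (ω i)) := by fun_prop
  rw [Measure.smul_apply, Measure.map_apply hm (MeasurableSet.univ_pi hs)]
  have : (fun (ω : Fin n → E) i => f (ω i)) ⁻¹' (Set.univ.pi s)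
      = Set.univ.pi (fun i => f ⁻¹' (s i)) := by ext x; simp
  rw [this, Measure.pi_pi, h]
  simp only [Measure.smul_apply, Measure.map_apply hf (hs _), smul_eq_mul]
  rw [Finset.prod_mul_distrib]
  simp

lemma thinning_piece (m : ℕ) (μ : Measure E) [IsProbabilityMeasure μ] (D : Set E)
    (hD : MeasurableSet D) (hDc : μ Dᶜ ≠ 0) (S : Finset (Fin m)) (F : Set E → ENNReal)
    (hF : ∀ j, Measurable fun ω : Fin j → E => F (Set.range ω)) :
    ∫⁻ ω, F (ω '' S) ∂(Measure.pi fun i : Fin m => μ.restrict (if i ∈ S then D else Dᶜ))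
      = μ Dᶜ ^ (m - S.card) * ∫⁻ ω : Fin S.card → E, F (Set.range ω) ∂(Measure.pi fun _ => μ.restrict D) := by
  set e := S.orderEmbOfFin rfl with he
  set k := μ Dᶜ ^ (m - S.card) with hk
  have hk0 : k ≠ 0 := pow_ne_zero _ hDc
  have hkt : k ≠ ⊤ := ENNReal.pow_ne_top (measure_ne_top _ _)
  have hrange : ∀ ω : Fin m → E, ω '' S = Set.range (fun i => ω (e i)) := by
    intro ω
    rw [← Finset.range_orderEmbOfFin S rfl, ← Set.range_comp]; rfl
  have hme : Measurable fun (ω : Fin m → E) (i : Fin S.card) => ω (e i) := by fun_prop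
  have key : (Measure.pi fun _ : Fin S.card => μ.restrict D)
      = k⁻¹ • (Measure.pi fun i : Fin m => μ.restrict (if i ∈ S then D else Dᶜ)).map
        (fun ω i => ω (e i)) := by
    apply Measure.pi_eq
    intro s hs
    rw [Measure.smul_apply, Measure.map_apply hme (MeasurableSet.univ_pi hs)]
    have hpre : (fun (ω : Fin m → E) (i : Fin S.card) => ω (e i)) ⁻¹' (Set.univ.pi s)
        = Set.univ.pi (fun i : Fin m => ⋂ (j : Fin S.card) (_ : e j = i), s j) := by
      ext ω
      simp only [Set.mem_preimage, Set.mem_pi, Set.mem_univ, true_implies, Set.mem_iInter]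
      constructor
      · rintro h i j rfl; exact h j
      · intro h j; exact h _ j rfl
    rw [hpre, Measure.pi_pi, ← Finset.prod_mul_prod_compl S]
    have h1 : ∏ i ∈ S, (μ.restrict (if i ∈ S then D else Dᶜ)) (⋂ (j : Fin S.card) (_ : e j = i), s j)
        = ∏ j, μ.restrict D (s j) := by
      have him : S = Finset.univ.map e.toEmbedding := by
        ext i
        have := Set.ext_iff.mp (Finset.range_orderEmbOfFin S rfl) i
        simp only [Set.mem_range, Finset.mem_coe] at this
        simp [← this, he]
      have h3 : ∀ f : Fin m → ENNReal, ∏ i ∈ S, f i = ∏ j, f (e j) := by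
        intro f
        conv_lhs => rw [him]
        rw [Finset.prod_map]; rfl
      rw [h3]
      apply Finset.prod_congr rfl
      intro j _
      have hmem : e j ∈ S := Finset.orderEmbOfFin_mem S rfl j
      rw [if_pos hmem]
      congr 1
      ext x
      simp only [Set.mem_iInter]
      constructor
      · intro h; exact h j rfl
      · intro h j' hj'
        have := e.injective hj'
        rwa [this]
    have h2 : ∏ i ∈ Sᶜ, (μ.restrict (if i ∈ S then D else Dᶜ)) (⋂ (j : Fin S.card) (_ : e j = i), s j)
        = k := by
      rw [hk]
      have : ∀ i ∈ Sᶜ, (μ.restrict (if i ∈ S then D else Dᶜ)) (⋂ (j : Fin S.card) (_ : e j = i), s j) = μ Dᶜ := by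
        intro i hi
        rw [Finset.mem_compl] at hi
        rw [if_neg hi]
        have : (⋂ (j : Fin S.card) (_ : e j = i), s j) = Set.univ := by
          apply Set.eq_univ_of_forall
          intro x
          simp only [Set.mem_iInter]
          rintro j rfl
          exact absurd (Finset.orderEmbOfFin_mem S rfl j) hi
        rw [this, Measure.restrict_apply_univ]
      rw [Finset.prod_congr rfl this, Finset.prod_const, Finset.card_compl, Fintype.card_fin]
    rw [h1, h2, smul_eq_mul, mul_comm, mul_assoc, ENNReal.mul_inv_cancel hk0 hkt, mul_one]
  rw [key, lintegral_smul_measure, smul_eq_mul, ← mul_assoc, ENNReal.mul_inv_cancel hk0 hkt, one_mul,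
    lintegral_map (hF _) hme]
  simp only [hrange]

lemma thinning (m : ℕ) (μ : Measure E) [IsProbabilityMeasure μ] (D : Set E)
    (hD : MeasurableSet D) (hDc : μ Dᶜ ≠ 0) (F : Set E → ENNReal)
    (hF : ∀ j, Measurable fun ω : Fin j → E => F (Set.range ω)) :
    ∫⁻ ω : Fin m → E, F (Set.range ω ∩ D) ∂(Measure.pi fun _ => μ)
      = ∑ j ∈ Finset.range (m+1), (m.choose j : ENNReal) * (μ Dᶜ ^ (m - j)
        * ∫⁻ ω : Fin j → E, F (Set.range ω) ∂(Measure.pi fun _ => μ.restrict D)) := by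
  classical
  have hms : ∀ S : Finset (Fin m),
      MeasurableSet (Set.univ.pi fun i : Fin m => if i ∈ S then D else Dᶜ) := by
    intro S
    apply MeasurableSet.univ_pi
    intro i
    split_ifs
    · exact hD
    · exact hD.compl
  have hFS : ∀ S : Finset (Fin m), Measurable fun ω : Fin m → E => F (ω '' S) := by
    intro S
    have hme : Measurable fun (ω : Fin m → E) (i : Fin S.card) => ω (S.orderEmbOfFin rfl i) := by
      fun_prop
    have := (hF S.card).comp hme
    convert this using 1
    ext ω
    simp only [Function.comp]
    congr 1
    conv_lhs => rw [← Finset.range_orderEmbOfFin S rfl, ← Set.range_comp]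
    rfl
  have hpt : ∀ ω : Fin m → E, F (Set.range ω ∩ D) = ∑ S ∈ (Finset.univ : Finset (Fin m)).powerset,
      (Set.univ.pi fun i : Fin m => if i ∈ S then D else Dᶜ).indicator (fun ω => F (ω '' S)) ω := by
    intro ω
    set S₀ : Finset (Fin m) := Finset.univ.filter (fun i => ω i ∈ D) with hS₀
    rw [Finset.sum_eq_single S₀]
    · rw [Set.indicator_of_mem]
      · congr 1
        ext x
        simp [hS₀]
        constructor
        · rintro ⟨⟨i, rfl⟩, h⟩; exact ⟨i, h, rfl⟩
        · rintro ⟨i, h, rfl⟩; exact ⟨⟨i, rfl⟩, h⟩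
      · intro i _
        by_cases h : ω i ∈ D
        · simp [hS₀, h]
        · simp [hS₀, h]
    · intro S _ hne
      apply Set.indicator_of_notMem
      intro hmem
      apply hne
      ext i
      have := hmem i (Set.mem_univ i)
      by_cases h : i ∈ S
      · simp only [h, if_true] at this; simp [hS₀, h, this]
      · simp only [h, if_false] at this
        simpa [hS₀, h] using this
    · simp
  simp_rw [hpt]
  rw [lintegral_finsetSum]
  swap
  · intro S _; exact (hFS S).indicator (hms S)
  have : ∀ S ∈ (Finset.univ : Finset (Fin m)).powerset, ∫⁻ ω : Fin m → E,
      (Set.univ.pi fun i : Fin m => if i ∈ S then D else Dᶜ).indicator (fun ω => F (ω '' S)) ω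
        ∂(Measure.pi fun _ => μ) = (fun j => μ Dᶜ ^ (m - j)
        * ∫⁻ ω : Fin j → E, F (Set.range ω) ∂(Measure.pi fun _ => μ.restrict D)) S.card := by
    intro S _
    rw [lintegral_indicator (hms S), Measure.restrict_pi_pi, thinning_piece m μ D hD hDc S F hF]
  rw [Finset.sum_congr rfl this]
  refine (Finset.sum_powerset_apply_card (fun j => μ Dᶜ ^ (m - j)
        * ∫⁻ ω : Fin j → E, F (Set.range ω) ∂(Measure.pi fun _ => μ.restrict D))).trans ?_
  simp [nsmul_eq_mul]

lemma min_split_piece (m : ℕ) (μ : Measure E) [IsProbabilityMeasure μ] (F : Set E → ENNReal)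
    (hF : ∀ j, Measurable fun ω : Fin j → E => F (Set.range ω)) (C : Set (E × E))
    (hC : MeasurableSet C) (i : Fin (m+1)) :
    ∫⁻ ω : Fin (m+1) → E, ({ω | ∀ j, (ω i, ω (i.succAbove j)) ∈ C} : Set (Fin (m+1) → E)).indicator
        (fun ω => F (Set.range ω)) ω ∂(Measure.pi fun _ => μ)
      = ∫⁻ x, ∫⁻ ω in Set.univ.pi (fun _ : Fin m => {p | (x, p) ∈ C}), F (insert x (Set.range ω))
        ∂(Measure.pi fun _ => μ) ∂μ := by
  have hms : MeasurableSet ({ω | ∀ j, (ω i, ω (i.succAbove j)) ∈ C} : Set (Fin (m+1) → E)) := by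
    rw [Set.ofPred_forall]
    apply MeasurableSet.iInter
    intro j
    exact (by fun_prop : Measurable fun ω : Fin (m+1) → E => (ω i, ω (i.succAbove j))) hC
  have hmf := (hF (m+1)).indicator hms
  have hmp := (measurePreserving_piFinSuccAbove (fun _ : Fin (m+1) => μ) i).symm
  rw [← hmp.lintegral_comp hmf, lintegral_prod]
  swap
  · exact (hmf.comp hmp.measurable).aemeasurable
  apply lintegral_congr
  intro x
  rw [← lintegral_indicator]
  swap
  · apply MeasurableSet.univ_pi
    intro j
    exact measurable_prodMk_left hC
  apply lintegral_congr
  intro ω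
  have e1 : (MeasurableEquiv.piFinSuccAbove (fun _ : Fin (m+1) => E) i).symm (x, ω)
      = i.insertNth x ω := rfl
  rw [e1]
  by_cases h : ∀ j, (x, ω j) ∈ C
  · rw [Set.indicator_of_mem, Set.indicator_of_mem]
    · rw [Fin.range_insertNth]; rfl
    · intro j _; exact h j
    · intro j; simpa using h j
  · rw [Set.indicator_of_notMem, Set.indicator_of_notMem]
    · intro h'; exact h fun j => h' j (Set.mem_univ j)
    · intro h'; exact h fun j => by simpa using h' j

lemma min_split (m : ℕ) (μ : Measure E) [IsProbabilityMeasure μ] (F : Set E → ENNReal)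
    (hF : ∀ j, Measurable fun ω : Fin j → E => F (Set.range ω)) (κ : E → ℝ) (hκ : Measurable κ)
    (hnull : ∀ t, μ {p | κ p = t} = 0) :
    ∫⁻ ω : Fin (m+1) → E, F (Set.range ω) ∂(Measure.pi fun _ => μ)
      = ((m:ENNReal)+1) * ∫⁻ x, ∫⁻ ω in Set.univ.pi (fun _ : Fin m => {p | κ x ≤ κ p}),
        F (insert x (Set.range ω)) ∂(Measure.pi fun _ => μ) ∂μ := by
  have hC : MeasurableSet {p : E × E | κ p.1 ≤ κ p.2} :=
    measurableSet_le (hκ.comp measurable_fst) (hκ.comp measurable_snd)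
  have hC' : MeasurableSet {p : E × E | κ p.1 < κ p.2} :=
    measurableSet_lt (hκ.comp measurable_fst) (hκ.comp measurable_snd)
  have h1 := min_split_piece m μ F hF _ hC
  have h2 := min_split_piece m μ F hF _ hC'
  have heq : ∀ x, ∫⁻ ω in Set.univ.pi (fun _ : Fin m => {p | κ x ≤ κ p}),
        F (insert x (Set.range ω)) ∂(Measure.pi fun _ => μ)
      = ∫⁻ ω in Set.univ.pi (fun _ : Fin m => {p | κ x < κ p}),
        F (insert x (Set.range ω)) ∂(Measure.pi fun _ => μ) := by
    intro x
    rw [Measure.restrict_pi_pi, Measure.restrict_pi_pi]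
    have : μ.restrict {p | κ x ≤ κ p} = μ.restrict {p | κ x < κ p} := by
      apply Measure.restrict_congr_set
      have hn : ∀ᵐ p ∂μ, κ p ≠ κ x := by
        rw [ae_iff]; simpa using hnull (κ x)
      filter_upwards [hn] with p hp
      apply propext
      constructor
      · intro h; exact lt_of_le_of_ne h (Ne.symm hp)
      · intro h; exact le_of_lt h
    rw [this]
  have hms : ∀ (C : Set (E × E)), MeasurableSet C → ∀ i : Fin (m+1),
      MeasurableSet ({ω | ∀ j, (ω i, ω (i.succAbove j)) ∈ C} : Set (Fin (m+1) → E)) := by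
    intro C hC i
    rw [Set.ofPred_forall]
    apply MeasurableSet.iInter
    intro j
    exact (by fun_prop : Measurable fun ω : Fin (m+1) → E => (ω i, ω (i.succAbove j))) hC
  apply le_antisymm
  · calc ∫⁻ ω : Fin (m+1) → E, F (Set.range ω) ∂(Measure.pi fun _ => μ)
        ≤ ∫⁻ ω : Fin (m+1) → E, ∑ i : Fin (m+1),
          ({ω | ∀ j, (ω i, ω (i.succAbove j)) ∈ {p : E × E | κ p.1 ≤ κ p.2}} :
            Set (Fin (m+1) → E)).indicator (fun ω => F (Set.range ω)) ω ∂(Measure.pi fun _ => μ) := by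
          apply lintegral_mono
          intro ω
          obtain ⟨i, hi⟩ := Finite.exists_min (fun i => κ (ω i))
          refine le_trans ?_ (Finset.single_le_sum (fun _ _ => zero_le) (Finset.mem_univ i))
          rw [Set.indicator_of_mem]
          intro j; exact hi _
      _ = _ := by
          rw [lintegral_finsetSum]
          · rw [Finset.sum_congr rfl (fun i _ => h1 i)]
            simp [nsmul_eq_mul]
          · intro i _; exact (hF _).indicator (hms _ hC i)
  · simp_rw [heq]
    calc _ = ∫⁻ ω : Fin (m+1) → E, ∑ i : Fin (m+1),
          ({ω | ∀ j, (ω i, ω (i.succAbove j)) ∈ {p : E × E | κ p.1 < κ p.2}} :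
            Set (Fin (m+1) → E)).indicator (fun ω => F (Set.range ω)) ω ∂(Measure.pi fun _ => μ) := by
          rw [lintegral_finsetSum]
          · rw [Finset.sum_congr rfl (fun i _ => h2 i)]
            simp [nsmul_eq_mul]
          · intro i _; exact (hF _).indicator (hms _ hC' i)
      _ ≤ _ := by
          apply lintegral_mono
          intro ω
          by_cases hex : ∃ i : Fin (m+1), ∀ j, κ (ω i) < κ (ω (i.succAbove j))
          · obtain ⟨i, hi⟩ := hex
            simp only
            rw [Finset.sum_eq_single i]
            · exact Set.indicator_le_self _ _ _
            · intro i' _ hne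
              apply Set.indicator_of_notMem
              intro hi'
              obtain ⟨j, hj⟩ := Fin.exists_succAbove_eq hne
              obtain ⟨j', hj'⟩ := Fin.exists_succAbove_eq hne.symm
              have a1 := hi j
              have a2 := hi' j'
              rw [hj] at a1
              simp only [Set.mem_ofPred_eq] at a2
              rw [hj'] at a2
              exact lt_asymm a1 a2
            · simp
          · simp only
            rw [Finset.sum_eq_zero]
            · exact zero_le
            · intro i _
              apply Set.indicator_of_notMem
              intro hi
              exact hex ⟨i, hi⟩
end general

/-! ### The recursion -/

lemma ae_mem_T : ∀ᵐ p ∂μT, p ∈ T := by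
  unfold μT
  exact Measure.ae_smul_measure (ae_restrict_mem measurableSet_T) _

lemma ae_range_T (n : ℕ) : ∀ᵐ ω ∂(P n), Set.range ω ⊆ T := by
  have : ∀ᵐ ω ∂(P n), ∀ i, ω i ∈ T := by
    rw [ae_all_iff]
    intro i
    unfold P
    exact (Measure.quasiMeasurePreserving_eval (μ := fun _ : Fin n => μT) i).ae ae_mem_T
  filter_upwards [this] with ω h
  rintro _ ⟨i, rfl⟩
  exact h i

lemma μT_Af (α β γ δ : ℝ) (h : 0 < α * γ) (hT : Af α β γ δ '' T ⊆ T) :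
    μT (Af α β γ δ '' T) = ENNReal.ofReal (α * γ) := by
  have := congrArg (fun ν => ν Set.univ) (μT_restrict_Af α β γ δ h hT)
  simp only [Measure.restrict_apply_univ, Measure.smul_apply, smul_eq_mul] at this
  rw [this, Measure.map_apply (measurable_Af _ _ _ _) MeasurableSet.univ]
  simp

lemma measurable_insert (n : ℕ) : Measurable fun z : (ℝ × ℝ) × (Fin n → ℝ × ℝ) =>
    hullW (insert z.1 (Set.range z.2)) := by
  have h2 : Measurable fun z : (ℝ × ℝ) × (Fin n → ℝ × ℝ) =>
      (Fin.cons z.1 z.2 : Fin (n+1) → ℝ × ℝ) := by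
    rw [measurable_pi_iff]
    intro i
    refine Fin.cases ?_ (fun j => ?_) i
    · simpa using measurable_fst
    · simp only [Fin.cons_succ]; fun_prop
  convert (measurable_hullW (n+1)).comp h2 using 2
  simp only [Function.comp, Fin.range_cons]

lemma inner_r (m k : ℕ) (r : ℝ) (hr0 : 0 < r) (hr1 : r < 1) :
    ∫⁻ ω, hullW (insert (1 - r, 0) (Set.range ω)) ^ k ∂(P m)
      = ∑ j ∈ Finset.range (m+1), (m.choose j : ENNReal) * (ENNReal.ofReal r ^ (m - j)
        * (ENNReal.ofReal (1 - r) ^ j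
          * ∫⁻ ω, (ENNReal.ofReal r + ENNReal.ofReal (1 - r) * hullW (Set.range ω)) ^ k ∂(P j))) := by
  set D := Af (1 - r) 0 1 0 '' T with hDdef
  have hpos : 0 < (1 - r) * 1 := by linarith
  have hsub : D ⊆ T := scale_T_subset (1 - r) (by linarith) (by linarith)
  have hD : MeasurableSet D := measurableSet_Af_T _ _ _ _ (by linarith) (by norm_num)
  have hμD : μT D = ENNReal.ofReal (1 - r) := by
    rw [hDdef, μT_Af _ _ _ _ hpos hsub, mul_one]
  have hμDc : μT Dᶜ = ENNReal.ofReal r := by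
    rw [prob_compl_eq_one_sub hD, hμD, ← ENNReal.ofReal_one, ← ENNReal.ofReal_sub _ (by linarith)]
    congr 1; ring
  have h1 : ∫⁻ ω, hullW (insert (1 - r, 0) (Set.range ω)) ^ k ∂(P m)
      = ∫⁻ ω, (fun R => (ENNReal.ofReal r + hullZ (1 - r) R) ^ k) (Set.range ω ∩ D) ∂(P m) := by
    apply lintegral_congr_ae
    filter_upwards [ae_range_T m] with ω h
    rw [hullW_decomp r hr0 hr1 _ h]
  have hmz : ∀ j, Measurable fun ω : Fin j → ℝ × ℝ =>
      (fun R => (ENNReal.ofReal r + hullZ (1 - r) R) ^ k) (Set.range ω) := by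
    intro j
    exact ((measurable_hullZ (1 - r) j).const_add _).pow_const _
  rw [h1]
  unfold P
  refine (thinning m μT D hD (by rw [hμDc]; simpa using hr0)
    (fun R => (ENNReal.ofReal r + hullZ (1 - r) R) ^ k) hmz).trans ?_
  rw [hμDc]
  apply Finset.sum_congr rfl
  intro j _
  congr 2
  rw [pi_smul_map j μT (μT.restrict D) (Af (1 - r) 0 1 0) (measurable_Af _ _ _ _) _
    (μT_restrict_Af _ _ _ _ hpos hsub), lintegral_smul_measure, smul_eq_mul, mul_one]
  congr 1
  rw [lintegral_map (hmz j)]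
  swap
  · have := measurable_Af (1 - r) 0 1 0
    fun_prop
  apply lintegral_congr
  intro ω
  have : Set.range (fun i => Af (1 - r) 0 1 0 (ω i)) = Af (1 - r) 0 1 0 '' Set.range ω := by
    rw [← Set.range_comp]; rfl
  simp only
  rw [this, hullZ_scale _ (by linarith)]

def kap (p : ℝ × ℝ) : ℝ := p.2 / (1 - p.1)

lemma measurable_kap : Measurable kap := by
  unfold kap
  fun_prop

lemma kap_pt (r s : ℝ) (hr : 0 < r) : kap (1 - r, r * s) = s := by
  unfold kap
  simp only
  field_simp
  ring_nf
  try field_simp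

lemma kap_null (t : ℝ) : μT {p | kap p = t} = 0 := by
  have hm : MeasurableSet {p | kap p = t} := measurable_kap (measurableSet_singleton t)
  rw [← lintegral_indicator_one hm, lintegral_μT _ (measurable_one.indicator hm)]
  rw [setLIntegral_congr_fun (g := fun _ => 0) measurableSet_Ioo]
  · simp
  · intro r hr
    simp only
    have : ∫⁻ s in Set.Ioo (0:ℝ) 1, ({p | kap p = t} : Set (ℝ × ℝ)).indicator (1 : ℝ × ℝ → ENNReal) (1 - r, r * s)
        = 0 := by
      rw [lintegral_eq_zero_iff']
      · apply ae_restrict_of_ae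
        have : ∀ᵐ s : ℝ, s ≠ t := by
          rw [ae_iff]; simp
        filter_upwards [this] with s hs
        apply Set.indicator_of_notMem
        simp only [Set.mem_ofPred_eq]
        rw [kap_pt r s hr.1]; exact hs
      · apply Measurable.aemeasurable
        exact (measurable_one.indicator hm).comp (by fun_prop)
    rw [this, mul_zero]

lemma ae_fst_ne : ∀ᵐ p ∂μT, p.1 ≠ 1 := by
  have : ∀ᵐ p ∂μT, kap p ≠ 0 := by
    rw [ae_iff]; simpa using kap_null 0
  filter_upwards [this] with p hp h
  apply hp
  unfold kap
  simp [h]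

lemma restrict_kap (s : ℝ) (h0 : 0 < s) (h1 : s < 1) :
    μT.restrict {p | s ≤ kap p} = μT.restrict (Af 1 (-s) (1 - s) s '' T) := by
  apply Measure.restrict_congr_set
  filter_upwards [ae_mem_T, ae_fst_ne] with p hp hne
  apply propext
  change s ≤ kap p ↔ p ∈ Af 1 (-s) (1 - s) s '' T
  rw [image_shear_T s h0.le h1]
  have : 0 < 1 - p.1 := by
    have := (mem_T p).1 hp
    have h2 : p.1 ≤ 1 := by linarith [this.1, this.2.1, this.2.2]
    have := lt_of_le_of_ne h2 hne
    linarith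
  unfold kap
  rw [le_div_iff₀ this]
  exact ⟨fun h => ⟨hp, h⟩, fun h => h.2⟩

lemma inner_q (m k : ℕ) (r s : ℝ) (hr0 : 0 < r) (hr1 : r < 1) (h0 : 0 < s) (h1 : s < 1) :
    ∫⁻ ω in Set.univ.pi (fun _ : Fin m => {p | kap (1 - r, r * s) ≤ kap p}),
        hullW (insert (1 - r, r * s) (Set.range ω)) ^ k ∂(Measure.pi fun _ => μT)
      = ENNReal.ofReal (1 - s) ^ (m + k)
        * ∫⁻ ω, hullW (insert (1 - r, 0) (Set.range ω)) ^ k ∂(P m) := by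
  have hpos : 0 < 1 * (1 - s) := by linarith
  have hsub := shear_T_subset s h0.le h1
  have hmf : ∀ x : ℝ × ℝ, Measurable fun ω : Fin m → ℝ × ℝ => hullW (insert x (Set.range ω)) ^ k := by
    intro x
    exact ((measurable_insert m).comp measurable_prodMk_left).pow_const _
  rw [Measure.restrict_pi_pi, kap_pt r s hr0, restrict_kap s h0 h1,
    pi_smul_map m μT _ (Af 1 (-s) (1 - s) s) (measurable_Af _ _ _ _) _
      (μT_restrict_Af _ _ _ _ hpos hsub), lintegral_smul_measure, smul_eq_mul, one_mul, pow_add,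
      mul_assoc]
  congr 1
  rw [lintegral_map (hmf _), ← lintegral_const_mul _ (hmf _)]
  swap
  · have := measurable_Af 1 (-s) (1 - s) s
    fun_prop
  unfold P
  apply lintegral_congr
  intro ω
  have e1 : Set.range (fun i => Af 1 (-s) (1 - s) s (ω i)) = Af 1 (-s) (1 - s) s '' Set.range ω := by
    rw [← Set.range_comp]; rfl
  have e2 : ((1 - r, r * s) : ℝ × ℝ) = Af 1 (-s) (1 - s) s (1 - r, 0) := by
    unfold Af
    ext
    · simp
    · simp; ring
  rw [e1, e2, ← Set.image_insert_eq, hullW_shear s h1.le, mul_pow]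

lemma inner_q_int (m k : ℕ) :
    ∫⁻ s in Set.Ioo (0:ℝ) 1, ENNReal.ofReal (1 - s) ^ (m + k) = ENNReal.ofReal (1 / ((m + k : ℕ) + 1)) :=
  lintegral_one_sub_pow (m + k)

lemma recursion (m k : ℕ) :
    ∫⁻ ω, hullW (Set.range ω) ^ k ∂(P (m+1))
      = ((m:ENNReal) + 1) * (ENNReal.ofReal (1 / ((m + k : ℕ) + 1)) * ∫⁻ r in Set.Ioo (0:ℝ) 1,
        ENNReal.ofReal (2 * r) *
        ∑ j ∈ Finset.range (m+1), (m.choose j : ENNReal) * (ENNReal.ofReal r ^ (m - j)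
        * (ENNReal.ofReal (1 - r) ^ j
          * ∫⁻ ω, (ENNReal.ofReal r + ENNReal.ofReal (1 - r) * hullW (Set.range ω)) ^ k ∂(P j)))) := by
  have h := min_split m μT (fun R => hullW R ^ k) (fun j => (measurable_hullW j).pow_const k) kap
    measurable_kap kap_null
  have hms : Measurable fun x : ℝ × ℝ => ∫⁻ ω in Set.univ.pi (fun _ : Fin m => {p | kap x ≤ kap p}),
        hullW (insert x (Set.range ω)) ^ k ∂(Measure.pi fun _ => μT) := by
    have hC : MeasurableSet {z : (ℝ × ℝ) × (Fin m → ℝ × ℝ) | ∀ i, kap z.1 ≤ kap (z.2 i)} := by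
      rw [Set.ofPred_forall]
      apply MeasurableSet.iInter
      intro i
      exact measurableSet_le (measurable_kap.comp measurable_fst)
        (measurable_kap.comp ((measurable_pi_apply i).comp measurable_snd))
    have := (((measurable_insert m).pow_const k).indicator hC).lintegral_prod_right'
      (ν := Measure.pi fun _ : Fin m => μT)
    convert this using 2 with x
    rw [← lintegral_indicator]
    swap
    · apply MeasurableSet.univ_pi
      intro j
      exact measurableSet_le measurable_const measurable_kap
    apply lintegral_congr
    intro ω
    by_cases hx : ∀ i, kap x ≤ kap (ω i)
    · rw [Set.indicator_of_mem, Set.indicator_of_mem]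
      · exact hx
      · intro i _; exact hx i
    · rw [Set.indicator_of_notMem, Set.indicator_of_notMem]
      · exact hx
      · intro h'; exact hx fun i => h' i (Set.mem_univ i)
  unfold P at *
  rw [h, lintegral_μT _ hms]
  congr 1
  rw [← lintegral_const_mul']
  swap
  · simp
  apply setLIntegral_congr_fun measurableSet_Ioo
  intro r hr
  simp only
  rw [setLIntegral_congr_fun measurableSet_Ioo
    (fun s hs => inner_q m k r s hr.1 hr.2 hs.1 hs.2), lintegral_mul_const, inner_q_int,
    inner_r m k r hr.1 hr.2]
  · unfold P
    rw [← mul_assoc, ← mul_assoc, mul_comm (ENNReal.ofReal (2 * r))]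
  · fun_prop

/-! ### From the recursion to real sums -/

lemma beta_int (a b : ℕ) :
    ∫⁻ r in Set.Ioo (0:ℝ) 1, ENNReal.ofReal r ^ a * ENNReal.ofReal (1 - r) ^ b
      = ENNReal.ofReal ((a.factorial : ℝ) * b.factorial / (a + b + 1).factorial) := by
  have ha : (0:ℝ) < (a:ℝ) + 1 := by positivity
  have hb : (0:ℝ) < (b:ℝ) + 1 := by positivity
  have h := ProbabilityTheory.lintegral_betaPDF_eq_one ha hb
  have hB : ProbabilityTheory.beta ((a:ℝ)+1) ((b:ℝ)+1)
      = (a.factorial : ℝ) * b.factorial / (a + b + 1).factorial := by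
    unfold ProbabilityTheory.beta
    rw [Real.Gamma_nat_eq_factorial, Real.Gamma_nat_eq_factorial, ← Real.Gamma_nat_eq_factorial (a+b+1)]
    congr 2
    push_cast; ring
  have hpos := ProbabilityTheory.beta_pos ha hb
  rw [hB] at hpos
  rw [ProbabilityTheory.lintegral_betaPDF, hB] at h
  set B := (a.factorial : ℝ) * b.factorial / (a + b + 1).factorial with hBd
  rw [setLIntegral_congr_fun (g := fun r => ENNReal.ofReal (1 / B) *
    (ENNReal.ofReal r ^ a * ENNReal.ofReal (1 - r) ^ b)) measurableSet_Ioo, lintegral_const_mul] at h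
  · calc _ = ENNReal.ofReal B * (ENNReal.ofReal (1 / B) * ∫⁻ r in Set.Ioo (0:ℝ) 1,
        ENNReal.ofReal r ^ a * ENNReal.ofReal (1 - r) ^ b) := by
          rw [← mul_assoc, ← ENNReal.ofReal_mul hpos.le, mul_one_div_cancel hpos.ne']
          simp
      _ = _ := by rw [h, mul_one]
  · fun_prop
  · intro r hr
    have h1 : (0:ℝ) ≤ 1 - r := by linarith [hr.2]
    simp only [add_sub_cancel_right, Real.rpow_natCast]
    rw [← ENNReal.ofReal_pow hr.1.le, ← ENNReal.ofReal_pow h1,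
      ← ENNReal.ofReal_mul (by have := hr.1; positivity), ← ENNReal.ofReal_mul (by positivity), mul_assoc]

/-- Moments of the doubled area. -/
def U (k n : ℕ) : ENNReal := ∫⁻ ω, hullW (Set.range ω) ^ k ∂(P n)

lemma hullW_le_one (R : Set (ℝ × ℝ)) (hR : R ⊆ T) : hullW R ≤ 1 := by
  unfold hullW
  rw [← two_volume_T]
  gcongr
  apply convexHull_min _ convex_T
  apply Set.union_subset hR
  rintro p (rfl | rfl) <;> rw [mem_T] <;> norm_num

lemma U_le_one (k n : ℕ) : U k n ≤ 1 := by
  unfold U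
  calc _ ≤ ∫⁻ _, 1 ∂(P n) := by
        apply lintegral_mono_ae
        filter_upwards [ae_range_T n] with ω h
        exact pow_le_one₀ zero_le (hullW_le_one _ h)
    _ = 1 := by simp

lemma U_ne_top (k n : ℕ) : U k n ≠ ⊤ := ne_top_of_le_ne_top ENNReal.one_ne_top (U_le_one k n)

lemma hullW_empty : hullW ∅ = 0 := by
  have h1 : ∀ᵐ p ∂μT, kap p ≠ 1 := by
    rw [ae_iff]; simpa using kap_null 1
  have hs : convexHull ℝ ((∅ : Set (ℝ × ℝ)) ∪ {(1, 0), (0, 1)}) ⊆ T := by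
    apply convexHull_min _ convex_T
    rw [Set.empty_union]
    rintro p (rfl | rfl) <;> rw [mem_T] <;> norm_num
  have hl : convexHull ℝ ((∅ : Set (ℝ × ℝ)) ∪ {(1, 0), (0, 1)}) ⊆ {p | p.1 + p.2 = 1} := by
    apply convexHull_min
    · rw [Set.empty_union]
      rintro p (rfl | rfl) <;> simp
    · intro x hx y hy s t _ _ hst
      simp only [Set.mem_ofPred_eq, Prod.fst_add, Prod.snd_add, Prod.smul_fst, Prod.smul_snd,
        smul_eq_mul] at *
      linear_combination s * hx + t * hy + hst
  have h0 : μT (convexHull ℝ ((∅ : Set (ℝ × ℝ)) ∪ {(1, 0), (0, 1)})) = 0 := by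
    apply measure_mono_null (t := {p | ¬ (kap p ≠ 1 ∧ p.1 ≠ 1)})
    · intro p hp h
      apply h.1
      have := hl hp
      simp only [Set.mem_ofPred_eq] at this
      unfold kap
      rw [div_eq_one_iff_eq (sub_ne_zero.2 (Ne.symm h.2))]
      linarith
    · rw [← ae_iff]
      filter_upwards [h1, ae_fst_ne] with p a b
      exact ⟨a, b⟩
  unfold hullW
  rw [μT, Measure.smul_apply, Measure.restrict_apply' measurableSet_T,
    Set.inter_eq_left.2 hs, smul_eq_mul] at h0
  exact h0

lemma U_zero (k : ℕ) (hk : k ≠ 0) : U k 0 = 0 := by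
  unfold U
  have : ∀ ω : Fin 0 → ℝ × ℝ, hullW (Set.range ω) ^ k = 0 := by
    intro ω
    rw [Set.range_eq_empty, hullW_empty, zero_pow hk]
  rw [lintegral_congr this, lintegral_zero]

lemma expand1 (j : ℕ) (ρ σ : ENNReal) :
    ∫⁻ ω, (ρ + σ * hullW (Set.range ω)) ^ 1 ∂(P j) = ρ + σ * U 1 j := by
  simp only [U, pow_one]
  rw [lintegral_add_left measurable_const, lintegral_const_mul _ (measurable_hullW j)]
  simp

lemma expand2 (j : ℕ) (ρ σ : ENNReal) :
    ∫⁻ ω, (ρ + σ * hullW (Set.range ω)) ^ 2 ∂(P j)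
      = ρ ^ 2 + 2 * ρ * σ * U 1 j + σ ^ 2 * U 2 j := by
  have : ∀ ω : Fin j → ℝ × ℝ, (ρ + σ * hullW (Set.range ω)) ^ 2
      = ρ ^ 2 + 2 * ρ * σ * hullW (Set.range ω) + σ ^ 2 * hullW (Set.range ω) ^ 2 := by
    intro ω; ring
  have hm := measurable_hullW j
  simp only [this]
  rw [lintegral_add_left (by fun_prop), lintegral_add_left (by fun_prop),
    lintegral_const_mul _ hm, lintegral_const_mul _ (hm.pow_const 2)]
  simp [U]

lemma rec1 (m : ℕ) : U 1 (m+1) = ((m:ENNReal) + 1) * (ENNReal.ofReal (1 / ((m + 1 : ℕ) + 1)) *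
    ∑ j ∈ Finset.range (m+1), ((m.choose j : ENNReal) * 2
      * ENNReal.ofReal (((m-j+2).factorial : ℝ) * j.factorial / ((m-j+2) + j + 1).factorial)
      + (m.choose j : ENNReal) * 2 * U 1 j
      * ENNReal.ofReal (((m-j+1).factorial : ℝ) * (j+1).factorial / ((m-j+1) + (j+1) + 1).factorial))) := by
  have h := recursion m 1
  change U 1 (m+1) = _ at h
  rw [h]
  congr 2
  simp_rw [← beta_int, expand1]
  calc _ = ∫⁻ r in Set.Ioo (0:ℝ) 1, ∑ j ∈ Finset.range (m+1),
      (((m.choose j : ENNReal) * 2) * (ENNReal.ofReal r ^ (m-j+2) * ENNReal.ofReal (1-r) ^ j)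
      + ((m.choose j : ENNReal) * 2 * U 1 j)
        * (ENNReal.ofReal r ^ (m-j+1) * ENNReal.ofReal (1-r) ^ (j+1))) := by
        apply lintegral_congr
        intro r
        rw [ENNReal.ofReal_mul (by norm_num), Finset.mul_sum]
        apply Finset.sum_congr rfl
        intro j _
        rw [ENNReal.ofReal_ofNat]
        ring
    _ = _ := by
        rw [lintegral_finsetSum _ (fun j _ => by fun_prop)]
        apply Finset.sum_congr rfl
        intro j _
        rw [lintegral_add_left (by fun_prop), lintegral_const_mul _ (by fun_prop),
          lintegral_const_mul _ (by fun_prop)]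

lemma rec2 (m : ℕ) : U 2 (m+1) = ((m:ENNReal) + 1) * (ENNReal.ofReal (1 / ((m + 2 : ℕ) + 1)) *
    ∑ j ∈ Finset.range (m+1), ((m.choose j : ENNReal) * 2
      * ENNReal.ofReal (((m-j+3).factorial : ℝ) * j.factorial / ((m-j+3) + j + 1).factorial)
      + (m.choose j : ENNReal) * 4 * U 1 j
      * ENNReal.ofReal (((m-j+2).factorial : ℝ) * (j+1).factorial / ((m-j+2) + (j+1) + 1).factorial)
      + (m.choose j : ENNReal) * 2 * U 2 j
      * ENNReal.ofReal (((m-j+1).factorial : ℝ) * (j+2).factorial / ((m-j+1) + (j+2) + 1).factorial))) := by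
  have h := recursion m 2
  change U 2 (m+1) = _ at h
  rw [h]
  congr 2
  simp_rw [← beta_int, expand2]
  calc _ = ∫⁻ r in Set.Ioo (0:ℝ) 1, ∑ j ∈ Finset.range (m+1),
      (((m.choose j : ENNReal) * 2) * (ENNReal.ofReal r ^ (m-j+3) * ENNReal.ofReal (1-r) ^ j)
      + ((m.choose j : ENNReal) * 4 * U 1 j)
        * (ENNReal.ofReal r ^ (m-j+2) * ENNReal.ofReal (1-r) ^ (j+1))
      + ((m.choose j : ENNReal) * 2 * U 2 j)
        * (ENNReal.ofReal r ^ (m-j+1) * ENNReal.ofReal (1-r) ^ (j+2))) := by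
        apply lintegral_congr
        intro r
        rw [ENNReal.ofReal_mul (by norm_num), Finset.mul_sum]
        apply Finset.sum_congr rfl
        intro j _
        rw [ENNReal.ofReal_ofNat]
        ring
    _ = _ := by
        rw [lintegral_finsetSum _ (fun j _ => by fun_prop)]
        apply Finset.sum_congr rfl
        intro j _
        rw [lintegral_add_left (by fun_prop), lintegral_add_left (by fun_prop),
          lintegral_const_mul _ (by fun_prop),
          lintegral_const_mul _ (by fun_prop), lintegral_const_mul _ (by fun_prop)]

lemma fact_term (m j s t : ℕ) (hj : j ≤ m) :
    (m.choose j : ℝ) * (((m-j+s).factorial : ℝ) * (j+t).factorial / ((m-j+s) + (j+t) + 1).factorial)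
      = (((m-j+s).factorial : ℝ) / (m-j).factorial) * ((j+t).factorial / j.factorial)
        * (m.factorial / (m+s+t+1).factorial) := by
  have e : (m-j+s) + (j+t) + 1 = m+s+t+1 := by omega
  rw [e, Nat.cast_choose ℝ hj]
  have := Nat.factorial_ne_zero
  have h1 : ((m-j).factorial : ℝ) ≠ 0 := by exact_mod_cast this _
  have h2 : (j.factorial : ℝ) ≠ 0 := by exact_mod_cast this _
  have h3 : ((m+s+t+1).factorial : ℝ) ≠ 0 := by exact_mod_cast this _
  field_simp

lemma fr0 (d : ℕ) : ((d).factorial : ℝ) / d.factorial = 1 :=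
  div_self (by exact_mod_cast Nat.factorial_ne_zero _)

lemma fr1 (d : ℕ) : ((d+1).factorial : ℝ) / d.factorial = d+1 := by
  have : (d.factorial : ℝ) ≠ 0 := by exact_mod_cast Nat.factorial_ne_zero _
  rw [Nat.factorial_succ]; push_cast; field_simp

lemma fr2 (d : ℕ) : ((d+2).factorial : ℝ) / d.factorial = (d+1)*(d+2) := by
  have : (d.factorial : ℝ) ≠ 0 := by exact_mod_cast Nat.factorial_ne_zero _
  rw [Nat.factorial_succ, Nat.factorial_succ]; push_cast; field_simp; ring

lemma fr3 (d : ℕ) : ((d+3).factorial : ℝ) / d.factorial = (d+1)*(d+2)*(d+3) := by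
  have : (d.factorial : ℝ) ≠ 0 := by exact_mod_cast Nat.factorial_ne_zero _
  rw [Nat.factorial_succ, Nat.factorial_succ, Nat.factorial_succ]; push_cast; field_simp; ring

lemma fi3 (d : ℕ) : (d.factorial : ℝ) / (d+3).factorial = 1 / ((d+1)*(d+2)*(d+3)) := by
  rw [← fr3, one_div_div]

lemma fi4 (d : ℕ) : (d.factorial : ℝ) / (d+4).factorial = 1 / ((d+1)*(d+2)*(d+3)*(d+4)) := by
  have : (d.factorial : ℝ) ≠ 0 := by exact_mod_cast Nat.factorial_ne_zero _
  rw [Nat.factorial_succ, Nat.factorial_succ, Nat.factorial_succ, Nat.factorial_succ]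
  push_cast; field_simp; ring

lemma real_rec1 (n : ℕ) : ((n:ℝ)+1)^2*(n+2) * (U 1 n).toReal = ∑ j ∈ Finset.range n,
      (2*((n:ℝ)-j)*((n:ℝ)-j+1) + 2*((n:ℝ)-j)*((j:ℝ)+1) * (U 1 j).toReal) := by
  rcases n with _ | m
  · simp [U_zero]
  have hU := U_ne_top
  have hm1 : ((m:ENNReal) + 1).toReal = (m:ℝ) + 1 := by
    rw [ENNReal.toReal_add (by finiteness) (by finiteness)]; simp
  rw [rec1, ENNReal.toReal_mul, ENNReal.toReal_mul, hm1, ENNReal.toReal_sum]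
  swap
  · intro j _
    finiteness [hU 1 j]
  rw [Finset.mul_sum, Finset.mul_sum, Finset.mul_sum]
  apply Finset.sum_congr rfl
  intro j hj
  have hjm : j ≤ m := by simpa [Nat.lt_succ_iff] using hj
  rw [ENNReal.toReal_add (by finiteness) (by finiteness [hU 1 j])]
  simp only [ENNReal.toReal_mul, ENNReal.toReal_natCast, ENNReal.toReal_ofNat]
  rw [ENNReal.toReal_ofReal (by positivity), ENNReal.toReal_ofReal (by positivity),
    ENNReal.toReal_ofReal (by positivity)]
  have h1 := fact_term m j 2 0 hjm
  have h2 := fact_term m j 1 1 hjm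
  simp only [add_zero] at h1
  rw [fr0, fr2, fi3] at h1
  rw [fr1, fr1, fi3] at h2
  rw [Nat.cast_sub hjm] at h1 h2
  set x := (U 1 j).toReal
  push_cast at h1 h2 ⊢
  have e : ∀ A B C x : ℝ, C * 2 * A + C * 2 * x * B = 2 * (C * A) + 2 * x * (C * B) := by
    intros; ring
  rw [e, h1, h2]
  field_simp
  ring

lemma real_rec2 (n : ℕ) : ((n:ℝ)+1)*(n+2)^2*(n+3) * (U 2 n).toReal = ∑ j ∈ Finset.range n,
      (2*((n:ℝ)-j)*((n:ℝ)-j+1)*((n:ℝ)-j+2) + 4*((n:ℝ)-j)*((n:ℝ)-j+1)*((j:ℝ)+1) * (U 1 j).toReal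
        + 2*((n:ℝ)-j)*((j:ℝ)+1)*((j:ℝ)+2) * (U 2 j).toReal) := by
  rcases n with _ | m
  · simp [U_zero]
  have hU := U_ne_top
  have hm1 : ((m:ENNReal) + 1).toReal = (m:ℝ) + 1 := by
    rw [ENNReal.toReal_add (by finiteness) (by finiteness)]; simp
  rw [rec2, ENNReal.toReal_mul, ENNReal.toReal_mul, hm1, ENNReal.toReal_sum]
  swap
  · intro j _
    finiteness [hU 1 j, hU 2 j]
  rw [Finset.mul_sum, Finset.mul_sum, Finset.mul_sum]
  apply Finset.sum_congr rfl
  intro j hj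
  have hjm : j ≤ m := by simpa [Nat.lt_succ_iff] using hj
  rw [ENNReal.toReal_add (by finiteness [hU 1 j]) (by finiteness [hU 2 j]),
    ENNReal.toReal_add (by finiteness) (by finiteness [hU 1 j])]
  simp only [ENNReal.toReal_mul, ENNReal.toReal_natCast, ENNReal.toReal_ofNat]
  rw [ENNReal.toReal_ofReal (by positivity), ENNReal.toReal_ofReal (by positivity),
    ENNReal.toReal_ofReal (by positivity), ENNReal.toReal_ofReal (by positivity)]
  have h1 := fact_term m j 3 0 hjm
  have h2 := fact_term m j 2 1 hjm
  have h3 := fact_term m j 1 2 hjm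
  simp only [add_zero] at h1
  rw [fr0, fr3, fi4] at h1
  rw [fr2, fr1, fi4] at h2
  rw [fr1, fr2, fi4] at h3
  rw [Nat.cast_sub hjm] at h1 h2 h3
  set x := (U 1 j).toReal
  set y := (U 2 j).toReal
  push_cast at h1 h2 h3 ⊢
  have e : ∀ A B D C x y : ℝ, C * 2 * A + C * 4 * x * B + C * 2 * y * D
      = 2 * (C * A) + 4 * x * (C * B) + 2 * y * (C * D) := by
    intros; ring
  rw [e, h1, h2, h3]
  field_simp
  ring

lemma integral_vol_pow (k n : ℕ) :
    ∫ ω, (volume (Tchain n ω)).toReal ^ k ∂(P n) = (U k n).toReal / 2 ^ k := by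
  have h1 : ∀ ω : Fin n → ℝ × ℝ, (volume (Tchain n ω)).toReal ^ k
      = (hullW (Set.range ω) ^ k).toReal / 2 ^ k := by
    intro ω
    unfold hullW Tchain
    rw [ENNReal.toReal_pow, ENNReal.toReal_mul, mul_pow, ENNReal.toReal_ofNat]
    field_simp
  simp_rw [h1]
  rw [integral_div, integral_toReal]
  · rfl
  · exact ((measurable_hullW n).pow_const k).aemeasurable
  · filter_upwards [ae_range_T n] with ω h
    exact lt_of_le_of_lt (pow_le_one₀ zero_le (hullW_le_one _ h)) ENNReal.one_lt_top

/-! ### Algebra of the recursions -/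

/-- Weighted sum `∑_{j<n} (n-j) f j`. -/
def S1 (f : ℕ → ℝ) (n : ℕ) : ℝ := ∑ j ∈ Finset.range n, ((n:ℝ)-j) * f j

/-- Weighted sum `∑_{j<n} (n-j)(n-j+1) f j`. -/
def S2 (f : ℕ → ℝ) (n : ℕ) : ℝ := ∑ j ∈ Finset.range n, ((n:ℝ)-j) * ((n:ℝ)-j+1) * f j

/-- Weighted sum `∑_{j<n} (n-j)(n-j+1)(n-j+2)`. -/
def S3 (n : ℕ) : ℝ := ∑ j ∈ Finset.range n, ((n:ℝ)-j) * ((n:ℝ)-j+1) * ((n:ℝ)-j+2)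

lemma S1_first (f : ℕ → ℝ) (n : ℕ) :
    S1 f (n+1) = S1 f n + ∑ j ∈ Finset.range (n+1), f j := by
  unfold S1
  rw [Finset.sum_range_succ, Finset.sum_range_succ (fun j => f j), ← add_assoc,
    ← Finset.sum_add_distrib]
  push_cast
  congr 1
  · exact Finset.sum_congr rfl fun j _ => by ring
  · ring

lemma S1_second (f : ℕ → ℝ) (n : ℕ) :
    S1 f (n+2) = 2 * S1 f (n+1) - S1 f n + f (n+1) := by
  have h1 := S1_first f n
  have h2 := S1_first f (n+1)
  rw [Finset.sum_range_succ] at h2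
  linarith

lemma S2_first (f : ℕ → ℝ) (n : ℕ) :
    S2 f (n+1) = S2 f n + 2 * S1 f (n+1) := by
  unfold S1 S2
  rw [Finset.sum_range_succ, Finset.sum_range_succ (fun j => ((((n+1:ℕ)):ℝ)-j) * f j),
    mul_add 2, ← add_assoc, Finset.mul_sum, ← Finset.sum_add_distrib]
  push_cast
  congr 1
  · exact Finset.sum_congr rfl fun j _ => by ring
  · ring

lemma S3_first (n : ℕ) : S3 (n+1) = S3 n + 3 * S2 (fun _ => 1) (n+1) := by
  unfold S3 S2
  rw [Finset.sum_range_succ, Finset.sum_range_succ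
    (fun j : ℕ => ((((n+1:ℕ)):ℝ)-j) * ((((n+1:ℕ)):ℝ)-j+1) * 1),
    mul_add 3, ← add_assoc, Finset.mul_sum, ← Finset.sum_add_distrib]
  push_cast
  congr 1
  · exact Finset.sum_congr rfl fun j _ => by ring
  · ring

lemma psum1 (n : ℕ) : S1 (fun _ => 1) n = n * (n+1) / 2 := by
  induction n with
  | zero => simp [S1]
  | succ n ih =>
    rw [S1_first, ih]
    simp; ring

lemma psum2 (n : ℕ) : S2 (fun _ => 1) n = n * (n+1) * (n+2) / 3 := by
  induction n with
  | zero => simp [S2]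
  | succ n ih =>
    rw [S2_first, ih, psum1]
    push_cast; ring

lemma psum3 (n : ℕ) : S3 n = n * (n+1) * (n+2) * (n+3) / 4 := by
  induction n with
  | zero => simp [S3]
  | succ n ih =>
    rw [S3_first, ih, psum2]
    push_cast; ring

lemma H_succ (n : ℕ) : H (n+1) = H n + 1 / ((n:ℝ)+1) := by
  simp [H, Finset.sum_range_succ]

lemma H2_succ (n : ℕ) : H2 (n+1) = H2 n + 1 / ((n:ℝ)+1)^2 := by
  simp [H2, Finset.sum_range_succ]

lemma sum_form_a (a : ℕ → ℝ) (n : ℕ)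
    (ha : ((n:ℝ)+1)^2*(n+2) * a n = ∑ j ∈ Finset.range n,
      (2*((n:ℝ)-j)*((n:ℝ)-j+1) + 2*((n:ℝ)-j)*((j:ℝ)+1) * a j)) :
    ((n:ℝ)+1)*(n+2) * (((n:ℝ)+1) * a n)
      = 2/3 * (n*(n+1)*(n+2)) + 2 * S1 (fun j => ((j:ℝ)+1) * a j) n := by
  have h2 := psum2 n
  calc _ = ((n:ℝ)+1)^2*(n+2) * a n := by ring
    _ = 2 * S2 (fun _ => 1) n + 2 * S1 (fun j => ((j:ℝ)+1) * a j) n := by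
      rw [ha, Finset.sum_add_distrib, S1, S2, Finset.mul_sum, Finset.mul_sum]
      congr 1
      · exact Finset.sum_congr rfl fun j _ => by ring
      · exact Finset.sum_congr rfl fun j _ => by ring
    _ = _ := by rw [h2]; ring

lemma sum_form_b (a b : ℕ → ℝ) (n : ℕ)
    (hb : ((n:ℝ)+1)*(n+2)^2*(n+3) * b n = ∑ j ∈ Finset.range n,
      (2*((n:ℝ)-j)*((n:ℝ)-j+1)*((n:ℝ)-j+2) + 4*((n:ℝ)-j)*((n:ℝ)-j+1)*((j:ℝ)+1) * a j
        + 2*((n:ℝ)-j)*((j:ℝ)+1)*((j:ℝ)+2) * b j)) :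
    ((n:ℝ)+2)*(n+3) * (((n:ℝ)+1)*((n:ℝ)+2) * b n)
      = 1/2 * (n*(n+1)*(n+2)*(n+3)) + 4 * S2 (fun j => ((j:ℝ)+1) * a j) n
        + 2 * S1 (fun j => ((j:ℝ)+1) * ((j:ℝ)+2) * b j) n := by
  have h2 := psum3 n
  calc _ = ((n:ℝ)+1)*(n+2)^2*(n+3) * b n := by ring
    _ = 2 * S3 n + 4 * S2 (fun j => ((j:ℝ)+1) * a j) n
        + 2 * S1 (fun j => ((j:ℝ)+1) * ((j:ℝ)+2) * b j) n := by
      rw [hb, Finset.sum_add_distrib, Finset.sum_add_distrib, S1, S2, S3, Finset.mul_sum,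
        Finset.mul_sum, Finset.mul_sum]
      congr 1
      · congr 1
        · exact Finset.sum_congr rfl fun j _ => by ring
        · exact Finset.sum_congr rfl fun j _ => by ring
      · exact Finset.sum_congr rfl fun j _ => by ring
    _ = _ := by rw [h2]; ring

lemma solve_y (y : ℕ → ℝ)
    (hy : ∀ n : ℕ, ((n:ℝ)+1)*(n+2) * y n = 2/3 * (n*(n+1)*(n+2)) + 2 * S1 y n) (n : ℕ) :
    y n = ((n:ℝ)+1) - (2/3 * H (n+1) + 1/3) := by
  induction n using Nat.strong_induction_on with
  | _ n ih =>
    match n, ih with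
    | 0, _ =>
      have := hy 0
      simp [S1] at this
      simp [H, this]; norm_num
    | 1, _ =>
      have h0 := hy 0
      have h1 := hy 1
      simp [S1] at h0
      simp [S1, h0] at h1
      norm_num [H, Finset.sum_range_succ]
      linarith
    | n+2, ih =>
      have i1 := ih (n+1) (by omega)
      have i0 := ih n (by omega)
      have s0 := hy n
      have s1 := hy (n+1)
      have s2 := hy (n+2)
      have e := S1_second y n
      have k1 := H_succ (n+1)
      have k2 := H_succ (n+2)
      rw [k2, show H (n+2) = _ from k1]
      rw [k1] at i1
      push_cast at *
      have hp : (0:ℝ) < n+1 := by positivity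
      have hp2 : (0:ℝ) < n+2 := by positivity
      have hp3 : (0:ℝ) < n+3 := by positivity
      have hp4 : (0:ℝ) < n+4 := by positivity
      have key : ((n:ℝ)+3)*((n:ℝ)+4) * y (n+2) - 2 * (((n:ℝ)+2)*((n:ℝ)+3) * y (n+1))
        + ((n:ℝ)+1)*((n:ℝ)+2) * y n = 4*(n+2) + 2 * y (n+1) := by
        linear_combination s2 - 2 * s1 + s0 + 2 * e
      rw [i1, i0] at key
      rw [show (n:ℝ)+1+1 = n+2 by ring] at *
      rw [show (n:ℝ)+2+1 = n+3 by ring] at *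
      field_simp at key ⊢
      apply mul_left_cancel₀ hp4.ne'
      linear_combination key

/-- closed form for `(n+1)(n+2) E V_n^2` -/
def xcl (n : ℕ) : ℝ :=
  ((n:ℝ)+1)*(n+2) + ((10/27 * H (n+2) + 4/9 * H2 (n+2) - 28/27 + 4/(9*((n:ℝ)+3)))
    + (2/3 * H (n+2) + 1/3)^2 - (2*n+3) * (2/3 * H (n+2) + 1/3))

lemma solve_x (x y : ℕ → ℝ) (hyc : ∀ n : ℕ, y n = ((n:ℝ)+1) - (2/3 * H (n+1) + 1/3))
    (hy : ∀ n : ℕ, ((n:ℝ)+1)*(n+2) * y n = 2/3 * (n*(n+1)*(n+2)) + 2 * S1 y n)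
    (hx : ∀ n : ℕ, ((n:ℝ)+2)*(n+3) * x n = 1/2 * (n*(n+1)*(n+2)*(n+3)) + 4 * S2 y n + 2 * S1 x n)
    (n : ℕ) :
    x n = xcl n := by
  induction n using Nat.strong_induction_on with
  | _ n ih =>
    match n, ih with
    | 0, _ =>
      have := hx 0
      simp [S1, S2] at this
      norm_num [xcl, H, H2, this, Finset.sum_range_succ]
    | 1, _ =>
      have h0 := hx 0
      have h1 := hx 1
      have g0 := hyc 0
      simp [S1, S2] at h0
      norm_num [H] at g0
      simp [S1, S2, h0, g0] at h1
      norm_num [xcl, H, H2, Finset.sum_range_succ]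
      linarith
    | n+2, ih =>
      have i1 := ih (n+1) (by omega)
      have i0 := ih n (by omega)
      have s0 := hx n
      have s1 := hx (n+1)
      have s2 := hx (n+2)
      have e := S1_second x n
      have u1 := S2_first y n
      have u2 := S2_first y (n+1)
      have w1 := hy (n+1)
      have w2 := hy (n+2)
      have k1 := H_succ (n+1)
      have k2 := H_succ (n+2)
      have k3 := H_succ (n+3)
      have l2 := H2_succ (n+2)
      have l3 := H2_succ (n+3)
      have c1 := hyc (n+1)
      have c2 := hyc (n+2)
      unfold xcl at *
      rw [show n+1+1 = n+2 by ring] at *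
      rw [show n+2+1 = n+3 by ring] at *
      rw [show n+3+1 = n+4 by ring] at *
      rw [show n+1+2 = n+3 by ring] at *
      rw [show n+2+2 = n+4 by ring] at *
      push_cast at *
      rw [k3, l3, k2, l2]
      rw [k2, l2] at i1
      have hp : (0:ℝ) < n+1 := by positivity
      have hp2 : (0:ℝ) < n+2 := by positivity
      have hp3 : (0:ℝ) < n+3 := by positivity
      have hp4 : (0:ℝ) < n+4 := by positivity
      have hp5 : (0:ℝ) < n+5 := by positivity
      have key : ((n:ℝ)+4)*((n:ℝ)+5) * x (n+2) - 2 * (((n:ℝ)+3)*((n:ℝ)+4) * x (n+1))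
        + ((n:ℝ)+2)*((n:ℝ)+3) * x n = 2 * x (n+1) + 6 * (n+2)*(n+3)
          + 4 * ((n+3)*(n+4)*y (n+2) - (n+2)*(n+3)*y (n+1) - 2*(n+2)*(n+3)) := by
        linear_combination s2 - 2 * s1 + s0 + 2 * e + 4 * u2 - 4 * u1 - 4 * w2 + 4 * w1
      rw [c1, c2, i1, i0, k2] at key
      have : ((n:ℝ)+4)*((n:ℝ)+5) ≠ 0 := by positivity
      apply mul_left_cancel₀ this
      rw [show (n:ℝ)+1+1 = n+2 by ring] at *
      rw [show (n:ℝ)+2+1 = n+3 by ring] at *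
      rw [show (n:ℝ)+3+1 = n+4 by ring] at *
      rw [show (n:ℝ)+1+3 = n+4 by ring] at *
      rw [show (n:ℝ)+2+3 = n+5 by ring] at *
      field_simp at key ⊢
      linear_combination key


lemma H_bounds (n : ℕ) (hn : 1 ≤ n) : Real.log n ≤ H (n+2) ∧ H (n+2) ≤ Real.log n + 3 := by
  have hH : ∀ m : ℕ, H m = ((harmonic m : ℚ) : ℝ) := by
    intro m
    simp [H, harmonic]
  have hn' : (1:ℝ) ≤ n := by exact_mod_cast hn
  constructor
  · rw [hH]
    refine le_trans ?_ (log_add_one_le_harmonic (n+2))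
    apply Real.log_le_log (by linarith)
    push_cast; linarith
  · have h1 := harmonic_le_one_add_log n
    rw [H_succ, H_succ, hH]
    have : 1 / ((n:ℝ)+1) ≤ 1 := by
      rw [div_le_one (by linarith)]; linarith
    have : 1 / (((n+1:ℕ):ℝ)+1) ≤ 1 := by
      push_cast
      rw [div_le_one (by linarith)]; linarith
    linarith

lemma H2_bounds (n : ℕ) : 0 ≤ H2 n ∧ H2 n ≤ 2 := by
  constructor
  · exact Finset.sum_nonneg fun i _ => by positivity
  · have : ∀ n : ℕ, H2 (n+1) ≤ 2 - 1/((n:ℝ)+1) := by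
      intro n
      induction n with
      | zero => norm_num [H2]
      | succ n ih =>
        rw [H2_succ]
        push_cast
        have : 1/((n:ℝ)+1+1)^2 ≤ 1/((n:ℝ)+1) - 1/((n:ℝ)+1+1) := by
          rw [div_sub_div _ _ (by positivity) (by positivity), div_le_div_iff₀ (by positivity) (by positivity)]
          nlinarith [(n.cast_nonneg : (0:ℝ) ≤ n)]
        linarith
    cases n with
    | zero => simp [H2]
    | succ n =>
      have h := this n
      have : 0 ≤ 1/((n:ℝ)+1) := by positivity
      linarith

lemma log_sq_le (x : ℝ) (hx : 1 ≤ x) : Real.log x ^ 2 ≤ 4 * x := by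
  have h0 : 0 ≤ Real.log x := Real.log_nonneg hx
  have h1 : Real.log (Real.sqrt x) ≤ Real.sqrt x := by
    have := Real.log_le_sub_one_of_pos (x := Real.sqrt x) (Real.sqrt_pos.mpr (by linarith))
    linarith
  rw [Real.log_sqrt (by linarith)] at h1
  have h2 := Real.sq_sqrt (show 0 ≤ x by linarith)
  have h3 : Real.log x ≤ 2 * Real.sqrt x := by linarith
  calc Real.log x ^ 2 ≤ (2 * Real.sqrt x)^2 := by gcongr
    _ = 4 * x := by rw [mul_pow, h2]; norm_num

set_option maxHeartbeats 1000000 in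
lemma asymp (a b : ℕ → ℝ)
    (ha : ∀ n : ℕ, ((n:ℝ)+1) * a n = ((n:ℝ)+1) - (2/3 * H (n+1) + 1/3))
    (hb : ∀ n : ℕ, ((n:ℝ)+1) * (n+2) * b n = xcl n) (n : ℕ) (hn : 1 ≤ n) :
    |(b n - a n ^ 2) / 4 - 7 * Real.log n / (27 * (n:ℝ)^2)| ≤ 100 / (n:ℝ)^2 := by
  have ha' := ha n
  have hb' := hb n
  obtain ⟨hL, hU⟩ := H_bounds n hn
  obtain ⟨hL2, hU2⟩ := H2_bounds (n+2)
  have hs := H_succ (n+1)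
  have hn' : (1:ℝ) ≤ n := by exact_mod_cast hn
  have hlog := Real.log_nonneg hn'
  have hlog1 := Real.log_le_sub_one_of_pos (x := (n:ℝ)) (by linarith)
  have hlog2 := log_sq_le n hn'
  unfold xcl at hb'
  push_cast at hs
  rw [show n+1+1 = n+2 by ring] at hs
  have hs' : H (n+1) = H (n+2) - 1/((n:ℝ)+2) := by rw [hs]; ring
  rw [hs'] at ha'
  generalize H (n+2) = h at *
  generalize H2 (n+2) = k at *
  generalize Real.log n = l at *
  generalize a n = a at *
  generalize b n = b at *
  clear hs hs' ha hb
  generalize (n:ℝ) = x at *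
  have hp1 : 0 < x := by linarith
  have hp2 : 0 < x+1 := by linarith
  have hp3 : 0 < x+2 := by linarith
  have hp4 : 0 < x+3 := by linarith
  set E := 2/3 * h + 1/3 with hE
  have hid : (b - a^2) = (28/27 * h + (4/9*k + 4/(9*(x+3)) - 55/27)) / ((x+1)*(x+2))
      + (-E^2 + 4*E/3 - 4/(9*(x+2))) / ((x+2)*(x+1)^2) := by
    have e1 : a = 1 - (E - 2/(3*(x+2)))/(x+1) := by
      field_simp
      have : (x+1)*a = (x+1) - (E - 2/3*(1/(x+2))) := by rw [ha', hE]; ring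
      have h3 : (x+2) * ((x+1)*a) = (x+2)*(x+1) - ((x+2)*E - 2/3) := by
        rw [this]; field_simp
      linear_combination 3*h3
    have e2 : b = 1 + ((10/27 * h + 4/9*k - 28/27 + 4/(9*(x+3))) + E^2 - (2*x+3)*E)/((x+1)*(x+2)) := by
      field_simp
      field_simp at hb'
      linear_combination hb'
    rw [e1, e2, hE]
    field_simp
    ring
  set c' := 4/9*k + 4/(9*(x+3)) - 55/27 with hc
  set g := -E^2 + 4*E/3 - 4/(9*(x+2)) with hg
  have hq3 : 0 ≤ 4/(9*(x+3)) ∧ 4/(9*(x+3)) ≤ 1 := by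
    refine ⟨by positivity, ?_⟩
    rw [div_le_one (by positivity)]; linarith
  have hq2 : 0 ≤ 4/(9*(x+2)) ∧ 4/(9*(x+2)) ≤ 1 := by
    refine ⟨by positivity, ?_⟩
    rw [div_le_one (by positivity)]; linarith
  have hcb : |c'| ≤ 3 := by
    rw [abs_le]; constructor <;> [linarith; linarith]
  have hE0 : 0 ≤ E := by rw [hE]; linarith
  have hE1 : E ≤ l + 3 := by rw [hE]; linarith
  have hE2 : E^2 ≤ 26*x := by nlinarith only [sq_nonneg (l-3), hE0, hE1, hlog2, hn', hlog]
  have hgb : |g| ≤ 31*x := by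
    rw [abs_le]; constructor <;> linarith [sq_nonneg E]
  obtain ⟨t, ht⟩ : ∃ t, t = x^2/((x+1)*(x+2)) := ⟨_, rfl⟩
  obtain ⟨s, hs⟩ : ∃ s, s = x^2/((x+2)*(x+1)^2) := ⟨_, rfl⟩
  have ht0 : 0 ≤ t := by rw [ht]; positivity
  have ht1 : t ≤ 1 := by rw [ht, div_le_one (by positivity), show (x+1)*(x+2) = x^2+3*x+2 by ring]; linarith
  have ht2 : l * (1 - t) ≤ 3 := by
    have : 1 - t ≤ 3/(x+1) := by
      rw [ht, sub_le_iff_le_add, div_add_div _ _ (by positivity) (by positivity),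
        le_div_iff₀ (by positivity)]
      linarith [show 3 * ((x+1)*(x+2)) + (x+1)*x^2 - 1*((x+1)*((x+1)*(x+2))) = 4*(x+1) by ring]
    calc l * (1-t) ≤ (x+1) * (3/(x+1)) := by
          apply mul_le_mul (by linarith) this (by linarith) (by linarith)
      _ = 3 := by field_simp
  have hs0 : 0 ≤ s := by rw [hs]; positivity
  have hs1 : s ≤ 1/x := by
    rw [hs, div_le_div_iff₀ (by positivity) (by positivity)]
    linarith [pow_pos hp1 2, pow_pos hp1 3,
      show 1*((x+2)*(x+1)^2) - x^2*x = 4*x^2+5*x+2 by ring]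
  have hmain : x^2 * (b - a^2) = (28/27*h + c') * t + g * s := by
    rw [hid, ht, hs]; ring
  have hgs : |g * s| ≤ 31 := by
    rw [abs_mul, abs_of_nonneg hs0]
    calc |g| * s ≤ (31*x) * (1/x) := by gcongr
      _ = 31 := by field_simp
  have hct : |c' * t| ≤ 3 := by
    rw [abs_mul, abs_of_nonneg ht0]
    nlinarith only [abs_nonneg c', ht0, ht1, hcb]
  have hfin : |x^2 * (b - a^2) - 28/27*l| ≤ 400 := by
    rw [hmain]
    have h1 : 0 ≤ (h - l) * t := mul_nonneg (by linarith) ht0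
    have h2 : (h - l) * t ≤ 3 := by nlinarith only [ht0, ht1, hL, hU]
    have h3 : 0 ≤ l * (1-t) := mul_nonneg hlog (by linarith)
    rw [abs_le] at hgs hct ⊢
    constructor <;> linarith [show (28/27*h + c') * t + g * s - 28/27*l = 28/27 * ((h-l)*t) - 28/27 * (l*(1-t)) + c'*t + g*s by ring]
  have : (b - a^2)/4 - 7*l/(27*x^2) = (x^2 * (b - a^2) - 28/27*l) / (4*x^2) := by
    field_simp
    ring
  rw [this, abs_div, abs_of_pos (show 0 < 4*x^2 by positivity), div_le_div_iff₀ (by positivity) (by positivity)]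
  nlinarith only [pow_pos hp1 2, hfin]

/-- `var(vol(T_n)) = 7 log n / (27 n²) + O(n⁻²)`. -/
theorem stmt18 :
    ∃ C > (0 : ℝ), ∃ n₀ : ℕ, ∀ n ≥ n₀,
      |((∫ ω, (volume (Tchain n ω)).toReal ^ 2 ∂ P n)
          - (∫ ω, (volume (Tchain n ω)).toReal ∂ P n) ^ 2)
        - 7 * Real.log n / (27 * (n : ℝ) ^ 2)| ≤ C / (n : ℝ) ^ 2 := by
  refine ⟨100, by norm_num, 1, ?_⟩
  intro n hn
  have hy := fun n => sum_form_a (fun j => (U 1 j).toReal) n (real_rec1 n)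
  have hx := fun n => sum_form_b (fun j => (U 1 j).toReal) (fun j => (U 2 j).toReal) n (real_rec2 n)
  have hyc := solve_y (fun j => ((j:ℝ)+1) * (U 1 j).toReal) hy
  have hxc := solve_x (fun j => ((j:ℝ)+1) * ((j:ℝ)+2) * (U 2 j).toReal)
    (fun j => ((j:ℝ)+1) * (U 1 j).toReal) hyc hy hx
  have h := asymp (fun j => (U 1 j).toReal) (fun j => (U 2 j).toReal) hyc hxc n hn
  have e1 := integral_vol_pow 1 n
  have e2 := integral_vol_pow 2 n
  simp only [pow_one] at e1
  rw [e1, e2]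
  convert h using 3
  ring

end
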